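/- arXiv:1205.6018 — 2 statements merged into one kernel-verified Lean document; each statement's English description precedes it below -/
import Mathlib

section
/- Let μ be an even a.s.u. pmf on ℤ, and let ξ, ξ̃ be pmfs on ℤ with ξ̃ a.s.u. and ξ ≺ ξ̃ (ξ̃ majorizes ξ). Then ξ * μ ≺ ξ̃ * μ. -/
/-!
The proof is a discrete Riesz rearrangement argument.

An even a.s.u. pmf `μ` is a mixture of indicators of symmetric windows `[-n, n]`, with weights
`μ n - μ (n + 1) ≥ 0`.  Truncating the mixture at level `N` costs at most `μ N` per point,
which tends to `0`, so it suffices to compare, for each `n`, the sums `∑ x ∈ A, ∑ y ∈ [x - n, x + n], ξ y` and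
`∑ x ∈ B, ∑ y ∈ [x - n, x + n], ξt y`, where `B` consists of the first `m = |A|` points of the
spiral along which `ξt` decreases; `B` depends neither on `n` nor on `N`.

Let `a y = |A ∩ [y - n, y + n]|`.  The first sum is `∑ j < m, ξ {a > j}`, and majorization bounds
it by `∑ j < m, F (s j)`, with `s j = |{a > j}|` and `F r` the mass of the `r` largest values of `ξt`.  For `B`, the
level set at height `j` contains the first `t j` spiral points, where `t j = m + (2n+1) - 1 - 2j`
(or `0` once `j` reaches `m` or `2n+1`).  Since `F` is concave, `∑ F (s j) ≤ ∑ F (t j)` follows from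
the tail comparison `∑ j ≥ k, s j ≤ ∑ j ≥ k, t j = (m - k) (2n+1 - k)` (`sum_concave_le`), i.e. from
`∑ y, (a y - k)⁺ ≤ (m - k)⁺ (2n+1 - k)⁺` (`sum_cnt_sub_le`).  The latter is proved by adding the
points of `A` in increasing order: a new largest point `p` raises `(a y - k)⁺` only when
`[y - n, p - 1]` has at least `k` points, which leaves at most `2n+1 - k` values of `y`.
-/

open scoped BigOperators

/-- Spiral enumeration of ℤ: sp 1 = 0, sp 2 = 1, sp 3 = -1, sp 4 = 2, sp 5 = -2, … -/
def sp (k : ℕ) : ℤ := if k % 2 = 0 then ((k / 2 : ℕ) : ℤ) else -((k / 2 : ℕ) : ℤ)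

/-- `f` is almost symmetric and unimodal (a.s.u.) about `a`: its values, read in the
spiral order `f a, f (a+1), f (a-1), f (a+2), f (a-2), …` (or the mirrored order),
form a non-increasing sequence. -/
def ASU (f : ℤ → ℝ) (a : ℤ) : Prop :=
  Antitone (fun n : ℕ => f (a + sp (n + 1))) ∨
  Antitone (fun n : ℕ => f (a - sp (n + 1)))

/-- `Maj f g` (`f ≺ g`): for every m, the sum of any m values of f is at most the
sum of some m values of g, i.e. every partial sum of the m largest values of f is
at most that of g. -/
def Maj (f g : ℤ → ℝ) : Prop :=
  ∀ A : Finset ℤ, ∃ B : Finset ℤ, B.card = A.card ∧ ∑ x ∈ A, f x ≤ ∑ x ∈ B, g x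

/-- A probability mass function on ℤ. -/
def IsPmf (f : ℤ → ℝ) : Prop := (∀ x, 0 ≤ f x) ∧ HasSum f 1

/-! ### Overlaps of a finite set with windows -/

/-- The number of points of `A` within distance `n` of `y`. -/
def cnt (n : ℕ) (A : Finset ℤ) (y : ℤ) : ℕ :=
  (A.filter (fun x => y - n ≤ x ∧ x ≤ y + n)).card

/-- Among all `A` of given cardinality, the overlap counts with windows of length `2n+1` have the
largest total excess over every level `k` when `A` is an interval. -/
lemma sum_cnt_sub_le (n k : ℕ) (U A : Finset ℤ) :
    ∑ y ∈ U, (cnt n A y - k) ≤ (A.card - k) * (2 * n + 1 - k) := by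
  induction A using Finset.induction_on_max with
  | empty => simp [cnt]
  | insert a s hs ih =>
    have ha : a ∉ s := fun h => lt_irrefl _ (hs a h)
    rw [Finset.card_insert_of_notMem ha]
    have hins : ∀ y, cnt n (insert a s) y =
        cnt n s y + if y - n ≤ a ∧ a ≤ y + n then 1 else 0 := by
      intro y
      unfold cnt
      rw [Finset.filter_insert]
      split_ifs with h
      · rw [Finset.card_insert_of_notMem (by simp [ha])]
      · rfl
    have hle : ∀ y, cnt n s y ≤ s.card := fun y => Finset.card_filter_le _ _
    by_cases hk : k ≤ s.card
    · have hstep : ∀ y ∈ U, cnt n (insert a s) y - k ≤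
          (cnt n s y - k) + if y ∈ Finset.Icc (a - n) (a + n - k) then 1 else 0 := by
        intro y _
        rw [hins y]
        by_cases h1 : y - n ≤ a ∧ a ≤ y + n
        · by_cases h2 : k ≤ cnt n s y
          · have h3 : cnt n s y ≤ (Finset.Ico (y - n) a).card := by
              apply Finset.card_le_card
              intro x hx
              rw [Finset.mem_filter] at hx
              rw [Finset.mem_Ico]
              exact ⟨hx.2.1, hs x hx.1⟩
            rw [Int.card_Ico] at h3
            have : y ∈ Finset.Icc (a - n) (a + n - k) := by
              rw [Finset.mem_Icc]; omega
            rw [if_pos h1, if_pos this]; omega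
          · rw [if_pos h1]; omega
        · rw [if_neg h1]; omega
      calc _ ≤ ∑ y ∈ U, ((cnt n s y - k) +
              if y ∈ Finset.Icc (a - n) (a + n - k : ℤ) then 1 else 0) :=
            Finset.sum_le_sum hstep
        _ = ∑ y ∈ U, (cnt n s y - k) +
              (U.filter (fun y => y ∈ Finset.Icc (a - n) (a + n - k : ℤ))).card := by
            rw [Finset.sum_add_distrib, Finset.card_filter]
        _ ≤ (s.card - k) * (2 * n + 1 - k) + (2 * n + 1 - k) := by
            refine add_le_add ih ?_
            calc _ ≤ (Finset.Icc (a - n) (a + n - k : ℤ)).card := by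
                  apply Finset.card_le_card
                  intro y hy
                  exact (Finset.mem_filter.1 hy).2
              _ ≤ _ := by rw [Int.card_Icc]; omega
        _ = _ := by
            rw [show s.card + 1 - k = (s.card - k) + 1 by omega]; ring
    · have : ∑ y ∈ U, (cnt n (insert a s) y - k) = 0 := by
        apply Finset.sum_eq_zero
        intro y _
        rw [hins y]
        have := hle y
        split_ifs <;> omega
      rw [this]; exact Nat.zero_le _

/-- Layer-cake formula for the mass, with multiplicity, of the windows centred at points of `A`. -/
lemma sum_window (n : ℕ) (A U : Finset ℤ) (hU : ∀ x ∈ A, Finset.Icc (x - n) (x + n : ℤ) ⊆ U)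
    (f : ℤ → ℝ) :
    ∑ x ∈ A, ∑ y ∈ Finset.Icc (x - n) (x + n : ℤ), f y =
      ∑ j ∈ Finset.range A.card, ∑ y ∈ U.filter (fun y => j < cnt n A y), f y := by
  have h1 : ∀ x ∈ A, ∑ y ∈ Finset.Icc (x - n) (x + n : ℤ), f y =
      ∑ y ∈ U, if y - n ≤ x ∧ x ≤ y + n then f y else 0 := by
    intro x hx
    rw [← Finset.sum_filter]
    refine Finset.sum_congr ?_ fun _ _ => rfl
    ext y
    rw [Finset.mem_filter]
    constructor
    · intro hy
      refine ⟨hU x hx hy, ?_⟩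
      rw [Finset.mem_Icc] at hy
      omega
    · intro hy
      rw [Finset.mem_Icc]
      omega
  rw [Finset.sum_congr rfl h1, Finset.sum_comm]
  simp_rw [Finset.sum_filter]
  rw [Finset.sum_comm (s := Finset.range A.card)]
  refine Finset.sum_congr rfl fun y _ => ?_
  have hc : cnt n A y ≤ A.card := Finset.card_filter_le _ _
  rw [← Finset.sum_filter, ← Finset.sum_filter, Finset.sum_const, Finset.sum_const]
  congr 1
  rw [show (Finset.range A.card).filter (fun j => j < cnt n A y) = Finset.range (cnt n A y) by
    ext j; simp only [Finset.mem_filter, Finset.mem_range]; omega]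
  rw [Finset.card_range]
  rfl

lemma sum_level_card (n k : ℕ) (A U : Finset ℤ) :
    ∑ j ∈ Finset.Ico k A.card, (U.filter (fun y => j < cnt n A y)).card =
      ∑ y ∈ U, (cnt n A y - k) := by
  simp_rw [Finset.card_filter]
  rw [Finset.sum_comm]
  refine Finset.sum_congr rfl fun y _ => ?_
  have hc : cnt n A y ≤ A.card := Finset.card_filter_le _ _
  rw [← Finset.card_filter]
  rw [show (Finset.Ico k A.card).filter (fun j => j < cnt n A y) = Finset.Ico k (cnt n A y) by
    ext j; simp only [Finset.mem_filter, Finset.mem_Ico]; omega]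
  rw [Nat.card_Ico]

/-- The size of the level set `{y | j < cnt n B y}` when `B` is an interval with `m` points, for
`j < m`. -/
def lev (n m j : ℕ) : ℕ := if j < m ∧ j < 2 * n + 1 then m + 2 * n - 2 * j else 0

lemma lev_antitone (n m : ℕ) : Antitone (lev n m) := by
  intro i j hij
  unfold lev
  split_ifs <;> omega

/-- The tail sums of `lev` attain the bound of `sum_cnt_sub_le` with equality. -/
lemma sum_lev (n m k : ℕ) (hk : k ≤ m) :
    ∑ j ∈ Finset.Ico k m, lev n m j = (m - k) * (2 * n + 1 - k) := by
  induction hk using Nat.decreasingInduction with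
  | self => simp
  | of_succ k hk ih =>
    rw [Finset.sum_eq_sum_Ico_succ_bot hk, ih]
    unfold lev
    by_cases h : k < 2 * n + 1
    · rw [if_pos ⟨hk, h⟩]
      obtain ⟨p, rfl⟩ : ∃ p, m = k + 1 + p := ⟨m - (k + 1), by omega⟩
      obtain ⟨q, hq⟩ : ∃ q, 2 * n + 1 = k + 1 + q := ⟨2 * n + 1 - (k + 1), by omega⟩
      rw [hq, show k + 1 + p + 2 * n - 2 * k = p + q + 1 by omega]
      simp only [show k + 1 + p - (k + 1) = p by omega, show k + 1 + q - (k + 1) = q by omega,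
        show k + 1 + p - k = p + 1 by omega, show k + 1 + q - k = q + 1 by omega]
      ring
    · rw [if_neg (by omega), show 2 * n + 1 - (k + 1) = 0 by omega,
        show 2 * n + 1 - k = 0 by omega]
      simp

/-! ### Concave sums -/

/-- Abel summation: nondecreasing nonnegative weights against a sequence whose tail sums are
nonpositive. -/
lemma abel_le (M : ℕ) (w d : ℕ → ℝ) (hw : Monotone w) (hw0 : ∀ j, 0 ≤ w j)
    (hd : ∀ k ≤ M, ∑ j ∈ Finset.Ico k M, d j ≤ 0) :
    ∑ j ∈ Finset.range M, w j * d j ≤ 0 := by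
  have key : ∀ k, k ≤ M → ∑ j ∈ Finset.Ico k M, w j * d j ≤ w k * ∑ j ∈ Finset.Ico k M, d j := by
    intro k hk
    induction hk using Nat.decreasingInduction with
    | self => simp
    | of_succ k hk ih =>
      rw [Finset.sum_eq_sum_Ico_succ_bot hk, Finset.sum_eq_sum_Ico_succ_bot hk]
      have := mul_le_mul_of_nonpos_right (hw (Nat.le_succ k)) (hd (k + 1) hk)
      simp only [Nat.succ_eq_add_one] at this
      linarith
  rw [Finset.range_eq_Ico]
  exact (key 0 (Nat.zero_le _)).trans
    (mul_nonpos_of_nonneg_of_nonpos (hw0 0) (hd 0 (Nat.zero_le _)))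

/-- The supergradient inequality for the concave function `r ↦ ∑ i < r, g i`. -/
lemma partial_sum_tangent (g : ℕ → ℝ) (hg : Antitone g) (s t : ℕ) :
    ∑ i ∈ Finset.range s, g i - ∑ i ∈ Finset.range t, g i ≤ g t * ((s : ℝ) - t) := by
  rcases le_total t s with h | h
  · rw [← Finset.sum_Ico_eq_sub _ h]
    calc _ ≤ (Finset.Ico t s).card • g t :=
          Finset.sum_le_card_nsmul _ _ _ fun i hi => hg (Finset.mem_Ico.1 hi).1
      _ = _ := by rw [Nat.card_Ico, nsmul_eq_mul, Nat.cast_sub h]; ring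
  · have : (Finset.Ico s t).card • g t ≤ ∑ i ∈ Finset.Ico s t, g i :=
      Finset.card_nsmul_le_sum _ _ _ fun i hi => hg (Finset.mem_Ico.1 hi).2.le
    rw [Finset.sum_Ico_eq_sub _ h, Nat.card_Ico, nsmul_eq_mul, Nat.cast_sub h] at this
    linarith

/-- A form of Karamata's inequality for the concave function `r ↦ ∑ i < r, g i`. -/
lemma sum_concave_le (g : ℕ → ℝ) (hg : Antitone g) (hg0 : ∀ i, 0 ≤ g i) (M : ℕ) (s t : ℕ → ℕ)
    (ht : Antitone t)
    (h : ∀ k ≤ M, ∑ j ∈ Finset.Ico k M, s j ≤ ∑ j ∈ Finset.Ico k M, t j) :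
    ∑ j ∈ Finset.range M, ∑ i ∈ Finset.range (s j), g i ≤
      ∑ j ∈ Finset.range M, ∑ i ∈ Finset.range (t j), g i := by
  have h1 := abel_le M (fun j => g (t j)) (fun j => (s j : ℝ) - t j)
    (fun i j hij => hg (ht hij)) (fun j => hg0 _) (by
      intro k hk
      rw [Finset.sum_sub_distrib, sub_nonpos]
      exact_mod_cast h k hk)
  have h2 : ∑ j ∈ Finset.range M, (∑ i ∈ Finset.range (s j), g i - ∑ i ∈ Finset.range (t j), g i)
      ≤ ∑ j ∈ Finset.range M, g (t j) * ((s j : ℝ) - t j) :=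
    Finset.sum_le_sum fun j _ => partial_sum_tangent g hg _ _
  rw [Finset.sum_sub_distrib] at h2
  linarith

lemma sum_le_sum_range_card (g : ℕ → ℝ) (hg : Antitone g) (S : Finset ℕ) :
    ∑ i ∈ S, g i ≤ ∑ i ∈ Finset.range S.card, g i := by
  induction S using Finset.induction_on_max with
  | empty => simp
  | insert a s hs ih =>
    have ha : a ∉ s := fun h => lt_irrefl _ (hs a h)
    rw [Finset.card_insert_of_notMem ha, Finset.sum_insert ha, Finset.sum_range_succ]
    have : s.card ≤ a := by
      simpa using Finset.card_le_card (fun x hx => Finset.mem_range.2 (hs x hx) : s ⊆ Finset.range a)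
    linarith [hg this]

/-! ### Spiral balls and the window inequality -/

lemma sp_bounds {i t : ℕ} (h : i < t) :
    -(((t - 1) / 2 : ℕ) : ℤ) ≤ sp (i + 1) ∧ sp (i + 1) ≤ ((t / 2 : ℕ) : ℤ) := by
  unfold sp
  split_ifs <;> omega

lemma sp_surj {t : ℕ} (ht : 0 < t) {y : ℤ} (h1 : -(((t - 1) / 2 : ℕ) : ℤ) ≤ y)
    (h2 : y ≤ ((t / 2 : ℕ) : ℤ)) : ∃ i < t, sp (i + 1) = y := by
  rcases le_or_gt y 0 with h | h
  · refine ⟨(-2 * y).toNat, by omega, ?_⟩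
    unfold sp
    split_ifs <;> omega
  · refine ⟨(2 * y - 1).toNat, by omega, ?_⟩
    unfold sp
    split_ifs <;> omega

lemma sp_inj : Function.Injective (fun i : ℕ => sp (i + 1)) := by
  intro i j h
  simp only [sp] at h
  split_ifs at h <;> omega

/-- If `f` decreases along the spiral, the first spiral points carry its largest values. -/
lemma sum_le_spiral (f : ℤ → ℝ) (hf : Antitone (fun i : ℕ => f (sp (i + 1)))) (S : Finset ℤ) :
    ∑ y ∈ S, f y ≤ ∑ i ∈ Finset.range S.card, f (sp (i + 1)) := by
  classical
  obtain ⟨T, rfl⟩ : ∃ T : Finset ℕ, T.image (fun i => sp (i + 1)) = S := by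
    refine ⟨S.preimage (fun i : ℕ => sp (i + 1)) sp_inj.injOn, ?_⟩
    apply Finset.image_preimage_of_bij
    refine ⟨fun x hx => hx, sp_inj.injOn, fun y hy => ?_⟩
    obtain ⟨i, -, hi⟩ := sp_surj (t := 2 * y.natAbs + 1) (y := y) (by omega) (by omega) (by omega)
    exact ⟨i, by simpa [hi] using hy, hi⟩
  rw [Finset.sum_image sp_inj.injOn, Finset.card_image_of_injective _ sp_inj]
  exact sum_le_sum_range_card _ hf T

/-- The first `m` points of the spiral. -/
def ball (m : ℕ) : Finset ℤ := (Finset.range m).image (fun i => sp (i + 1))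

lemma ball_card (m : ℕ) : (ball m).card = m := by
  rw [ball, Finset.card_image_of_injective _ sp_inj, Finset.card_range]

/-- The overlap counts of a spiral ball have spiral balls inside their level sets. -/
lemma lt_cnt_ball {n m i j : ℕ} (h : i < lev n m j) : j < cnt n (ball m) (sp (i + 1)) := by
  have hb := sp_bounds h
  have hj : j < m ∧ j < 2 * n + 1 := by
    by_contra hc
    rw [lev, if_neg hc] at h
    omega
  rw [lev, if_pos hj] at hb
  generalize sp (i + 1) = y at hb ⊢
  have hsub : Finset.Icc (max (-(((m - 1) / 2 : ℕ) : ℤ)) (y - n)) (min ((m / 2 : ℕ) : ℤ) (y + n)) ⊆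
      (ball m).filter (fun x => y - n ≤ x ∧ x ≤ y + n) := by
    intro x hx
    rw [Finset.mem_Icc, max_le_iff, le_min_iff] at hx
    obtain ⟨i, hi, hi'⟩ := sp_surj (by omega : 0 < m) hx.1.1 hx.2.1
    rw [Finset.mem_filter]
    exact ⟨Finset.mem_image.2 ⟨i, Finset.mem_range.2 hi, hi'⟩, hx.1.2, hx.2.2⟩
  refine lt_of_lt_of_le ?_ (Finset.card_le_card hsub)
  rw [Int.card_Icc]
  omega

/-- The rearrangement inequality for the kernel `𝟙_[-n, n]`. -/
lemma window_le (n : ℕ) (ξ ξt : ℤ → ℝ) (h0 : ∀ x, 0 ≤ ξt x)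
    (hanti : Antitone (fun i : ℕ => ξt (sp (i + 1)))) (hmaj : Maj ξ ξt) (A : Finset ℤ) :
    ∑ x ∈ A, ∑ y ∈ Finset.Icc (x - n) (x + n : ℤ), ξ y ≤
      ∑ x ∈ ball A.card, ∑ y ∈ Finset.Icc (x - n) (x + n : ℤ), ξt y := by
  classical
  set m := A.card with hm
  let U (C : Finset ℤ) : Finset ℤ := C.biUnion fun x : ℤ => Finset.Icc (x - n) (x + n : ℤ)
  have hU : ∀ C : Finset ℤ, ∀ x ∈ C, Finset.Icc (x - n) (x + n : ℤ) ⊆ U C :=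
    fun C x hx => Finset.subset_biUnion_of_mem (fun x : ℤ => Finset.Icc (x - n) (x + n : ℤ)) hx
  rw [sum_window n A (U A) (hU A), sum_window n (ball m) (U (ball m)) (hU _), ball_card, ← hm]
  calc _ ≤ ∑ j ∈ Finset.range m,
        ∑ i ∈ Finset.range ((U A).filter (fun y => j < cnt n A y)).card, ξt (sp (i + 1)) := by
        refine Finset.sum_le_sum fun j _ => ?_
        obtain ⟨B, hB, hle⟩ := hmaj ((U A).filter (fun y => j < cnt n A y))
        rw [← hB]
        exact hle.trans (sum_le_spiral ξt hanti B)
    _ ≤ ∑ j ∈ Finset.range m, ∑ i ∈ Finset.range (lev n m j), ξt (sp (i + 1)) := by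
        refine sum_concave_le _ hanti (fun i => h0 _) m _ _ (lev_antitone n m) fun k hk => ?_
        rw [sum_lev n m k hk, hm, sum_level_card]
        exact sum_cnt_sub_le n k _ A
    _ ≤ _ := by
        refine Finset.sum_le_sum fun j _ => ?_
        rw [← Finset.sum_image (f := ξt) (g := fun i => sp (i + 1)) sp_inj.injOn]
        refine Finset.sum_le_sum_of_subset_of_nonneg ?_ fun _ _ _ => h0 _
        intro y hy
        obtain ⟨i, hi, rfl⟩ := Finset.mem_image.1 hy
        have hlt := lt_cnt_ball (Finset.mem_range.1 hi)
        refine Finset.mem_filter.2 ⟨?_, hlt⟩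
        obtain ⟨x, hx⟩ := Finset.card_pos.1 (lt_of_le_of_lt (Nat.zero_le _) hlt)
        rw [Finset.mem_filter] at hx
        refine hU _ x hx.1 ?_
        rw [Finset.mem_Icc]
        omega

/-! ### Mixtures of windows -/

/-- The mixture of window indicators that approximates `μ`, cut off at level `N`. -/
def trunc (μ : ℤ → ℝ) (N : ℕ) (z : ℤ) : ℝ :=
  ∑ n ∈ Finset.range N, (μ n - μ (n + 1)) * if z.natAbs ≤ n then 1 else 0

/-- The weights telescope. -/
lemma trunc_eq (μ : ℤ → ℝ) (N : ℕ) (z : ℤ) :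
    trunc μ N z = if z.natAbs ≤ N then μ (z.natAbs : ℤ) - μ N else 0 := by
  unfold trunc
  generalize z.natAbs = b
  induction N with
  | zero =>
    by_cases h : b ≤ 0
    · simp [Nat.le_zero.1 h]
    · simp [h]
  | succ N ih =>
    rw [Finset.sum_range_succ, ih]
    by_cases h : b ≤ N
    · rw [if_pos h, if_pos h, if_pos (by omega)]; push_cast; ring
    · rw [if_neg h, if_neg h]
      split_ifs with h'
      · rw [show b = N + 1 by omega]; simp
      · simp

lemma trunc_bounds (μ : ℤ → ℝ) (h0 : ∀ x, 0 ≤ μ x) (heven : ∀ k, μ k = μ (-k))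
    (hdec : Antitone (fun n : ℕ => μ n)) (N : ℕ) (z : ℤ) :
    trunc μ N z ≤ μ z ∧ μ z ≤ trunc μ N z + μ N := by
  have hz : μ z = μ (z.natAbs : ℤ) := by
    rcases Int.natAbs_eq z with h | h
    · rw [← h]
    · conv_lhs => rw [h, ← heven]
  rw [hz, trunc_eq]
  split_ifs with h
  · constructor <;> linarith [h0 N]
  · have := hdec (not_le.1 h).le
    simp only at this
    constructor <;> linarith [h0 z.natAbs]

lemma hasSum_trunc (μ f : ℤ → ℝ) (N : ℕ) (x : ℤ) :
    HasSum (fun x' => f x' * trunc μ N (x - x'))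
      (∑ n ∈ Finset.range N, (μ n - μ (n + 1)) *
        ∑ y ∈ Finset.Icc (x - n) (x + n : ℤ), f y) := by
  have h : ∀ n ∈ Finset.range N, HasSum
      (fun x' => (μ n - μ (n + 1)) * (if x' ∈ Finset.Icc (x - n) (x + n : ℤ) then f x' else 0))
      ((μ n - μ (n + 1)) * ∑ y ∈ Finset.Icc (x - n) (x + n : ℤ), f y) := by
    intro n _
    apply HasSum.mul_left
    have := hasSum_sum_of_ne_finset_zero (L := SummationFilter.unconditional ℤ)
      (f := fun x' => if x' ∈ Finset.Icc (x - n) (x + n : ℤ) then f x' else 0)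
      (s := Finset.Icc (x - n) (x + n : ℤ)) (fun b hb => if_neg hb)
    rwa [Finset.sum_congr rfl fun y hy => if_pos hy] at this
  convert hasSum_sum h using 2 with x'
  rw [trunc, Finset.mul_sum]
  refine Finset.sum_congr rfl fun n _ => ?_
  have : (x - x').natAbs ≤ n ↔ x' ∈ Finset.Icc (x - n) (x + n : ℤ) := by
    rw [Finset.mem_Icc]; omega
  simp only [this]
  split_ifs <;> ring

lemma summable_conv (μ f : ℤ → ℝ) (hμ : IsPmf μ) (hf : IsPmf f) (x : ℤ) :
    Summable (fun x' => f x' * μ (x - x')) := by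
  refine Summable.of_nonneg_of_le (fun y => mul_nonneg (hf.1 y) (hμ.1 _)) (fun y => ?_)
    hf.2.summable
  exact mul_le_of_le_one_right (hf.1 y) (le_hasSum hμ.2 _ fun j _ => hμ.1 j)

/-- Cutting the mixture off at level `N` changes the convolution by at most `μ N`. -/
lemma conv_bounds (μ f : ℤ → ℝ) (hμ : IsPmf μ) (heven : ∀ k, μ k = μ (-k))
    (hdec : Antitone (fun n : ℕ => μ n)) (hf : IsPmf f) (N : ℕ) (x : ℤ) :
    (∑ n ∈ Finset.range N, (μ n - μ (n + 1)) * ∑ y ∈ Finset.Icc (x - n) (x + n : ℤ), f y) ≤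
        ∑' x' : ℤ, f x' * μ (x - x') ∧
      ∑' x' : ℤ, f x' * μ (x - x') ≤
        (∑ n ∈ Finset.range N, (μ n - μ (n + 1)) *
          ∑ y ∈ Finset.Icc (x - n) (x + n : ℤ), f y) + μ N := by
  have hs := (summable_conv μ f hμ hf x).hasSum
  have ht := hasSum_trunc μ f N x
  constructor
  · exact hasSum_le (fun y => mul_le_mul_of_nonneg_left
      (trunc_bounds μ hμ.1 heven hdec N _).1 (hf.1 y)) ht hs
  · have h := ht.add (hf.2.mul_right (μ N))
    rw [one_mul] at h
    refine hasSum_le (fun y => ?_) hs h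
    rw [← mul_add]
    exact mul_le_mul_of_nonneg_left (trunc_bounds μ hμ.1 heven hdec N _).2 (hf.1 y)

lemma maj_conv_of_spiral (μ ξ ξt : ℤ → ℝ)
    (hμ : IsPmf μ) (hμeven : ∀ k, μ k = μ (-k)) (hdec : Antitone (fun n : ℕ => μ n))
    (hξ : IsPmf ξ) (hξt : IsPmf ξt) (hanti : Antitone (fun i : ℕ => ξt (sp (i + 1))))
    (hmaj : Maj ξ ξt) :
    Maj (fun x => ∑' x' : ℤ, ξ x' * μ (x - x'))
        (fun x => ∑' x' : ℤ, ξt x' * μ (x - x')) := by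
  intro A
  refine ⟨ball A.card, ball_card _, ?_⟩
  have hlim : Filter.Tendsto (fun N : ℕ => μ N) Filter.atTop (nhds 0) := by
    have := hμ.2.summable.comp_injective (i := fun n : ℕ => (n : ℤ)) Nat.cast_injective
    exact this.tendsto_atTop_zero
  have hlim' := (hlim.const_mul (A.card : ℝ)).const_add
    (∑ x ∈ ball A.card, ∑' x' : ℤ, ξt x' * μ (x - x'))
  rw [mul_zero, add_zero] at hlim'
  refine ge_of_tendsto' hlim' fun N => ?_
  calc _ ≤ ∑ x ∈ A, ((∑ n ∈ Finset.range N, (μ n - μ (n + 1)) *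
          ∑ y ∈ Finset.Icc (x - n) (x + n : ℤ), ξ y) + μ N) :=
        Finset.sum_le_sum fun x _ => (conv_bounds μ ξ hμ hμeven hdec hξ N x).2
    _ = (∑ n ∈ Finset.range N, (μ n - μ (n + 1)) *
          ∑ x ∈ A, ∑ y ∈ Finset.Icc (x - n) (x + n : ℤ), ξ y) + A.card * μ N := by
        rw [Finset.sum_add_distrib, Finset.sum_comm, Finset.sum_const, nsmul_eq_mul]
        simp only [Finset.mul_sum]
    _ ≤ (∑ n ∈ Finset.range N, (μ n - μ (n + 1)) *
          ∑ x ∈ ball A.card, ∑ y ∈ Finset.Icc (x - n) (x + n : ℤ), ξt y) + A.card * μ N := by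
        refine add_le_add_left (Finset.sum_le_sum fun n _ => ?_) _
        refine mul_le_mul_of_nonneg_left (window_le n ξ ξt hξt.1 hanti hmaj A) ?_
        have := hdec (Nat.le_succ n)
        simp only [Nat.succ_eq_add_one, Nat.cast_add, Nat.cast_one] at this
        linarith
    _ = (∑ x ∈ ball A.card, ∑ n ∈ Finset.range N, (μ n - μ (n + 1)) *
          ∑ y ∈ Finset.Icc (x - n) (x + n : ℤ), ξt y) + A.card * μ N := by
        rw [Finset.sum_comm]
        simp only [Finset.mul_sum]
    _ ≤ _ := add_le_add_left
        (Finset.sum_le_sum fun x _ => (conv_bounds μ ξt hμ hμeven hdec hξt N x).1) _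

theorem stmt4 (μ ξ ξt : ℤ → ℝ)
    (hμ : IsPmf μ) (hμeven : ∀ k, μ k = μ (-k)) (hμasu : ASU μ 0)
    (hξ : IsPmf ξ) (hξt : IsPmf ξt) (hξtasu : ASU ξt 0)
    (hmaj : Maj ξ ξt) :
    Maj (fun x => ∑' x' : ℤ, ξ x' * μ (x - x'))
        (fun x => ∑' x' : ℤ, ξt x' * μ (x - x')) := by
  have hsp : ∀ n : ℕ, sp (2 * n + 1) = -(n : ℤ) := by
    intro n
    unfold sp
    split_ifs <;> omega
  have hdec : Antitone (fun n : ℕ => μ n) := by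
    intro a b hab
    -- The odd spiral indices visit `0, -1, -2, …`, and evenness removes the sign.
    rcases hμasu with h | h
    · have := h (by omega : 2 * a ≤ 2 * b)
      simp only [hsp, zero_add] at this
      rwa [← hμeven, ← hμeven] at this
    · have := h (by omega : 2 * a ≤ 2 * b)
      simpa only [hsp, zero_sub, neg_neg] using this
  rcases hξtasu with h | h
  · simp only [zero_add] at h
    exact maj_conv_of_spiral μ ξ ξt hμ hμeven hdec hξ hξt h hmaj
  -- In the mirrored order, reflect `ξt`; both `Maj` and the even kernel `μ` are unaffected.
  · simp only [zero_sub] at h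
    have hneg : ∀ B : Finset ℤ, (B.map (Equiv.neg ℤ).toEmbedding).card = B.card :=
      fun B => Finset.card_map _
    have hmaj' : Maj ξ (fun x => ξt (-x)) := by
      intro A
      obtain ⟨B, hB, hle⟩ := hmaj A
      refine ⟨B.map (Equiv.neg ℤ).toEmbedding, (hneg B).trans hB, ?_⟩
      simpa using hle
    have hpmf : IsPmf (fun x => ξt (-x)) :=
      ⟨fun x => hξt.1 _, (Equiv.neg ℤ).hasSum_iff.2 hξt.2⟩
    intro A
    obtain ⟨B, hB, hle⟩ := maj_conv_of_spiral μ ξ _ hμ hμeven hdec hξ hpmf h hmaj' A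
    refine ⟨B.map (Equiv.neg ℤ).toEmbedding, (hneg B).trans hB, hle.trans (le_of_eq ?_)⟩
    rw [Finset.sum_map]
    refine Finset.sum_congr rfl fun x _ => ?_
    rw [← (Equiv.neg ℤ).tsum_eq (fun x' => ξt x' * μ ((Equiv.neg ℤ).toEmbedding x - x'))]
    refine tsum_congr fun y => ?_
    simp only [Equiv.neg_apply, Equiv.coe_toEmbedding]
    rw [hμeven (x - y), show -(x - y) = -x - -y by ring]
end

section
/- If μ : ℝⁿ → [0,∞) is symmetric unimodal about 0 and ξ, ξ̃ are non-negative integrable functions on ℝⁿ with ξ̃ symmetric unimodal (about 0) and ξ ≺ ξ̃, then ξ * μ ≺ ξ̃ * μ, where ≺ is the continuous majorization: ∫_{B(0,r)} ξ^σ ≤ ∫_{B(0,r)} ξ̃^σ for every r > 0. -/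
/-!
Majorization is handled through the equivalent hinge inequalities `∫ (f - s)₊ ≤ ∫ (g - s)₊`, `s > 0`.
These depend only on the distribution functions, so the rearrangements `ξσ`, `ξtσ`, `cσ`, `ctσ` can be
exchanged for `ξ`, `ξt` and the two convolutions (`hinge_of_ball_le`, `hinge_eq_of_equimeasurable`,
`setLIntegral_le_of_hinge`).

It remains to prove `∫ (ξ * μ - t)₊ ≤ ∫ (ξt * μ - t)₊` (`hinge_conv`). The left-hand side is the
supremum of `∫ h (ξ * μ - t)` over continuous compactly supported `h` with `0 ≤ h ≤ 1`. Up to an `L¹`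
error `ξ` is a continuous compactly supported `f`. A form of the Riesz rearrangement inequality
(`exists_symm`) then replaces `(f, h)` by radially non-increasing `(f', h')` with the same hinge
integrals, without decreasing the Riesz form `∬ f z * h x * μ (x - z)`. Now `W = h' * μ` is radially
non-increasing, so the layer-cake formula and the hinge inequality between `f'` and `ξt` give
`∫ f' W ≤ ∫ ξt W` up to the error (`riesz_le_of_hinge`); and `∫ ξt W = ∫ h' (ξt * μ)`, so the total is at
most `∫ h' (ξt * μ - t) ≤ ∫ (ξt * μ - t)₊`.

The Riesz inequality is proved by polarization. Replacing the values of a function at each pair of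
mirror points by their maximum (on the side of the origin) and minimum keeps the distribution function
and the modulus of continuity, does not decrease the Riesz form (`riesz_pol`), and lowers the second
moment unless it does nothing (`moment_pol`). By Arzelà–Ascoli the second moment has a minimizer among
the admissible pairs; being fixed by all polarizations, it is radially non-increasing.

The property of being radially non-increasing is written `∀ x y, ‖x‖ ≤ ‖y‖ → f y ≤ f x`, and everything
except the final step takes place in a finite-dimensional real inner product space `E`.
-/

open MeasureTheory

def SymmUnimodal {n : ℕ} (f : EuclideanSpace ℝ (Fin n) → ℝ) : Prop :=
  ∃ φ : ℝ → ℝ, AntitoneOn φ (Set.Ici 0) ∧ ∀ x, f x = φ ‖x‖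

/-- `fσ` is the symmetric decreasing rearrangement of `f`: it is radially
non-increasing, lower semicontinuous, and equimeasurable with `f`. -/
def IsSDR {n : ℕ} (f fσ : EuclideanSpace ℝ (Fin n) → ℝ) : Prop :=
  SymmUnimodal fσ ∧ LowerSemicontinuous fσ ∧
    ∀ t : ℝ, 0 < t → volume {x | t < fσ x} = volume {x | t < f x}

noncomputable def conv {n : ℕ} (f g : EuclideanSpace ℝ (Fin n) → ℝ) :
    EuclideanSpace ℝ (Fin n) → ℝ :=
  fun x => ∫ z, f z * g (x - z)

set_option linter.unusedSectionVars false

section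
variable {E : Type*} [NormedAddCommGroup E] [InnerProductSpace ℝ E]

open scoped ENNReal

/-! ### Reflections and polarization -/

/-- The reflection of `x` in the affine hyperplane `{p | ⟪p, e⟫ = c}`; a reflection only when `e` is a
unit vector. -/
def hrefl (e : E) (c : ℝ) (x : E) : E := x - (2 * (inner ℝ x e - c)) • e

lemma inner_hrefl {e : E} (he : ‖e‖ = 1) (c : ℝ) (x : E) :
    inner ℝ (hrefl e c x) e = 2 * c - inner ℝ x e := by
  rw [hrefl, inner_sub_left, real_inner_smul_left, real_inner_self_eq_norm_sq, he]
  ring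

lemma hrefl_hrefl {e : E} (he : ‖e‖ = 1) (c : ℝ) (x : E) : hrefl e c (hrefl e c x) = x := by
  rw [hrefl, inner_hrefl he, hrefl]
  module

/-- Reflecting one of two points brings them closer exactly when they lie on opposite sides of the
hyperplane. All distance comparisons below come from this identity. -/
lemma norm_sub_hrefl_sq {e : E} (he : ‖e‖ = 1) (c : ℝ) (x z : E) :
    ‖x - hrefl e c z‖ ^ 2 = ‖x - z‖ ^ 2 + 4 * (c - inner ℝ x e) * (c - inner ℝ z e) := by
  have h : x - hrefl e c z = (x - z) + (2 * (inner ℝ z e - c)) • e := by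
    rw [hrefl]; module
  rw [h, norm_add_sq_real, real_inner_smul_right, norm_smul, mul_pow, he, inner_sub_left,
    Real.norm_eq_abs, sq_abs]
  ring

lemma norm_hrefl_sq {e : E} (he : ‖e‖ = 1) (c : ℝ) (z : E) :
    ‖hrefl e c z‖ ^ 2 = ‖z‖ ^ 2 + 4 * c * (c - inner ℝ z e) := by
  have h := norm_sub_hrefl_sq he c 0 z
  simpa using h

lemma norm_hrefl_sub_hrefl {e : E} (he : ‖e‖ = 1) (c : ℝ) (x z : E) :
    ‖hrefl e c x - hrefl e c z‖ = ‖x - z‖ := by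
  have h := norm_sub_hrefl_sq he c (hrefl e c x) z
  rw [norm_sub_rev (hrefl e c x) z, norm_sub_hrefl_sq he c z x, norm_sub_rev z x, inner_hrefl he] at h
  have : ‖hrefl e c x - hrefl e c z‖ ^ 2 = ‖x - z‖ ^ 2 := by rw [h]; ring
  exact (sq_eq_sq₀ (norm_nonneg _) (norm_nonneg _)).1 this

lemma norm_hrefl_sub {e : E} (he : ‖e‖ = 1) (c : ℝ) (x z : E) :
    ‖hrefl e c x - z‖ = ‖x - hrefl e c z‖ := by
  rw [← norm_hrefl_sub_hrefl he c x (hrefl e c z), hrefl_hrefl he]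

lemma continuous_hrefl (e : E) (c : ℝ) : Continuous (hrefl e c) := by
  unfold hrefl; fun_prop

lemma norm_sub_le_norm_sub_hrefl {e : E} (he : ‖e‖ = 1) {c : ℝ} {x z : E}
    (h : 0 ≤ (c - inner ℝ x e) * (c - inner ℝ z e)) : ‖x - z‖ ≤ ‖x - hrefl e c z‖ := by
  have := norm_sub_hrefl_sq he c x z
  exact (sq_le_sq₀ (norm_nonneg _) (norm_nonneg _)).1 (by linarith)

lemma norm_sub_hrefl_le_norm_sub {e : E} (he : ‖e‖ = 1) {c : ℝ} {x z : E}
    (h : (c - inner ℝ x e) * (c - inner ℝ z e) ≤ 0) : ‖x - hrefl e c z‖ ≤ ‖x - z‖ := by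
  have := norm_sub_hrefl_sq he c x z
  exact (sq_le_sq₀ (norm_nonneg _) (norm_nonneg _)).1 (by linarith)

/-- Two distinct points are exchanged by the reflection in their perpendicular bisector; if `x` is
the point of smaller norm, the half-space `⟪·, e⟫ ≤ c` containing `x` also contains the origin. -/
lemma exists_hrefl_swap {x y : E} (hxy : x ≠ y) (hn : ‖x‖ ≤ ‖y‖) :
    ∃ (e : E) (c : ℝ), ‖e‖ = 1 ∧ 0 ≤ c ∧ (‖x‖ < ‖y‖ → 0 < c) ∧ hrefl e c x = y ∧
      inner ℝ x e < c := by
  have hd : 0 < ‖y - x‖ := norm_pos_iff.2 (sub_ne_zero.2 hxy.symm)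
  have hi : inner ℝ x (y - x) = (‖y‖ ^ 2 - ‖x‖ ^ 2 - ‖y - x‖ ^ 2) / 2 := by
    rw [norm_sub_sq_real, inner_sub_right, real_inner_self_eq_norm_sq, real_inner_comm]; ring
  have hxe : inner ℝ x ((‖y - x‖)⁻¹ • (y - x)) =
      (‖y‖ ^ 2 - ‖x‖ ^ 2) / (2 * ‖y - x‖) - ‖y - x‖ / 2 := by
    rw [real_inner_smul_right, hi]; field_simp
  refine ⟨(‖y - x‖)⁻¹ • (y - x), (‖y‖ ^ 2 - ‖x‖ ^ 2) / (2 * ‖y - x‖), ?_, ?_, ?_, ?_, ?_⟩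
  · rw [norm_smul, norm_inv, norm_norm, inv_mul_cancel₀ hd.ne']
  · have : ‖x‖ ^ 2 ≤ ‖y‖ ^ 2 := by gcongr
    exact div_nonneg (by linarith) (by positivity)
  · intro h
    have : ‖x‖ ^ 2 < ‖y‖ ^ 2 := by gcongr
    exact div_pos (by linarith) (by positivity)
  · rw [hrefl, hxe, smul_smul]
    have : 2 * ((‖y‖ ^ 2 - ‖x‖ ^ 2) / (2 * ‖y - x‖) - ‖y - x‖ / 2 -
      (‖y‖ ^ 2 - ‖x‖ ^ 2) / (2 * ‖y - x‖)) * ‖y - x‖⁻¹ = -1 := by field_simp; ring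
    rw [this]; module
  · rw [hxe]; linarith

/-- The two-point rearrangement (polarization) of `u` with respect to the half-space `⟪·, e⟫ ≤ c`:
of the two values at a pair of mirror points, the larger is placed in the half-space. The
half-space contains the origin when `0 ≤ c`. -/
noncomputable def pol (e : E) (c : ℝ) (u : E → ℝ) (x : E) : ℝ :=
  if inner ℝ x e ≤ c then max (u x) (u (hrefl e c x)) else min (u x) (u (hrefl e c x))

lemma hrefl_eq_self {e : E} {c : ℝ} {x : E} (h : inner ℝ x e = c) : hrefl e c x = x := by
  simp [hrefl, h]

lemma pol_of_le {e : E} {c : ℝ} {x : E} (u : E → ℝ) (h : inner ℝ x e ≤ c) :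
    pol e c u x = max (u x) (u (hrefl e c x)) := if_pos h

lemma pol_of_ge {e : E} {c : ℝ} {x : E} (u : E → ℝ) (h : c ≤ inner ℝ x e) :
    pol e c u x = min (u x) (u (hrefl e c x)) := by
  rcases h.eq_or_lt with h | h
  · rw [pol_of_le u h.symm.le, hrefl_eq_self h.symm]; simp
  · exact if_neg h.not_ge

lemma pol_hrefl_of_le {e : E} (he : ‖e‖ = 1) {c : ℝ} {x : E} (u : E → ℝ) (h : inner ℝ x e ≤ c) :
    pol e c u (hrefl e c x) = min (u x) (u (hrefl e c x)) := by
  rw [pol_of_ge u (by rw [inner_hrefl he]; linarith), hrefl_hrefl he, min_comm]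

lemma pol_hrefl_of_ge {e : E} (he : ‖e‖ = 1) {c : ℝ} {x : E} (u : E → ℝ) (h : c ≤ inner ℝ x e) :
    pol e c u (hrefl e c x) = max (u x) (u (hrefl e c x)) := by
  rw [pol_of_le u (by rw [inner_hrefl he]; linarith), hrefl_hrefl he, max_comm]

lemma continuous_pol {e : E} {c : ℝ} {u : E → ℝ} (hu : Continuous u) :
    Continuous (pol e c u) := by
  have h1 : Continuous fun x => u (hrefl e c x) := hu.comp (continuous_hrefl e c)
  refine Continuous.if_le (hu.max h1) (hu.min h1) (by fun_prop) continuous_const ?_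
  intro x hx
  rw [hrefl_eq_self hx]; simp

/-- Polarization only permutes the values of `u` on each mirror pair, so it preserves every integral
`∫ Φ ∘ u`. -/
lemma pol_pair {e : E} (he : ‖e‖ = 1) (c : ℝ) (u : E → ℝ) (Φ : ℝ → ℝ) (x : E) :
    Φ (pol e c u x) + Φ (pol e c u (hrefl e c x)) = Φ (u x) + Φ (u (hrefl e c x)) := by
  rcases le_total (inner ℝ x e) c with h | h
  · rw [pol_of_le u h, pol_hrefl_of_le he u h]
    rcases le_total (u x) (u (hrefl e c x)) with h' | h' <;> simp [h', add_comm]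
  · rw [pol_of_ge u h, pol_hrefl_of_ge he u h]
    rcases le_total (u x) (u (hrefl e c x)) with h' | h' <;> simp [h', add_comm]

/-- Polarization does not increase the modulus of continuity. -/
lemma pol_modulus {e : E} (he : ‖e‖ = 1) {c δ ε : ℝ} {u : E → ℝ}
    (hu : ∀ x y, ‖x - y‖ ≤ δ → |u x - u y| ≤ ε) (x y : E) (hxy : ‖x - y‖ ≤ δ) :
    |pol e c u x - pol e c u y| ≤ ε := by
  have h1 := hu x y hxy
  have h2 := hu (hrefl e c x) (hrefl e c y) (by rwa [norm_hrefl_sub_hrefl he])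
  have h3 : (c - inner ℝ x e) * (c - inner ℝ y e) ≤ 0 → |u x - u (hrefl e c y)| ≤ ε := fun h =>
    hu _ _ ((norm_sub_hrefl_le_norm_sub he h).trans hxy)
  have h4 : (c - inner ℝ x e) * (c - inner ℝ y e) ≤ 0 → |u (hrefl e c x) - u y| ≤ ε := fun h =>
    hu _ _ (by rw [norm_hrefl_sub he]; exact (norm_sub_hrefl_le_norm_sub he h).trans hxy)
  rw [abs_le] at *
  rcases le_total (inner ℝ x e) c with hx | hx <;> rcases le_total (inner ℝ y e) c with hy | hy
  · rw [pol_of_le u hx, pol_of_le u hy]; grind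
  · rw [pol_of_le u hx, pol_of_ge u hy]
    have h5 : (c - inner ℝ x e) * (c - inner ℝ y e) ≤ 0 :=
      mul_nonpos_of_nonneg_of_nonpos (by linarith) (by linarith)
    specialize h3 h5; specialize h4 h5
    grind
  · rw [pol_of_ge u hx, pol_of_le u hy]
    have h5 : (c - inner ℝ x e) * (c - inner ℝ y e) ≤ 0 :=
      mul_nonpos_of_nonpos_of_nonneg (by linarith) (by linarith)
    specialize h3 h5; specialize h4 h5
    grind
  · rw [pol_of_ge u hx, pol_of_ge u hy]; grind

/-- The pointwise inequality behind the Riesz inequality for polarizations: for two fixed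
mirror pairs, of `x` and of `z`, only two kernel values occur, and the rearranged products put the larger
weight on the larger kernel value. -/
lemma pol_kernel {e : E} (he : ‖e‖ = 1) {c : ℝ} (u v μ : E → ℝ)
    (hμ : ∀ x y, ‖x‖ ≤ ‖y‖ → μ y ≤ μ x) (x z : E) :
    u z * v x * μ (x - z) + u (hrefl e c z) * v (hrefl e c x) * μ (hrefl e c x - hrefl e c z) +
    (u (hrefl e c z) * v x * μ (x - hrefl e c z) + u z * v (hrefl e c x) * μ (hrefl e c x - z)) ≤
    pol e c u z * pol e c v x * μ (x - z) +
      pol e c u (hrefl e c z) * pol e c v (hrefl e c x) * μ (hrefl e c x - hrefl e c z) +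
    (pol e c u (hrefl e c z) * pol e c v x * μ (x - hrefl e c z) +
      pol e c u z * pol e c v (hrefl e c x) * μ (hrefl e c x - z)) := by
  have e1 : μ (hrefl e c x - hrefl e c z) = μ (x - z) :=
    le_antisymm (hμ _ _ (norm_hrefl_sub_hrefl he c x z).ge)
      (hμ _ _ (norm_hrefl_sub_hrefl he c x z).le)
  have e2 : μ (hrefl e c x - z) = μ (x - hrefl e c z) :=
    le_antisymm (hμ _ _ (norm_hrefl_sub he c x z).ge) (hμ _ _ (norm_hrefl_sub he c x z).le)
  rw [e1, e2]
  have k1 : 0 ≤ (c - inner ℝ x e) * (c - inner ℝ z e) → μ (x - hrefl e c z) ≤ μ (x - z) :=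
    fun h => hμ _ _ (norm_sub_le_norm_sub_hrefl he h)
  have k2 : (c - inner ℝ x e) * (c - inner ℝ z e) ≤ 0 → μ (x - z) ≤ μ (x - hrefl e c z) :=
    fun h => hμ _ _ (norm_sub_hrefl_le_norm_sub he h)
  generalize μ (x - z) = K₁ at *
  generalize μ (x - hrefl e c z) = K₂ at *
  -- only the difference of the two kernel values matters
  have key : ∀ a a' b b' : ℝ, a * b * K₁ + a' * b' * K₁ + (a' * b * K₂ + a * b' * K₂) =
      (a * b + a' * b') * (K₁ - K₂) + (a + a') * (b + b') * K₂ := fun a a' b b' => by ring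
  rw [key, key]
  have s1 := pol_pair he c u id z
  have s2 := pol_pair he c v id x
  simp only [id] at s1 s2
  rw [s1, s2]
  have hmm : ∀ a a' b b' : ℝ, a * b + a' * b' ≤ max a a' * max b b' + min a a' * min b b' := by
    intro a a' b b'
    rcases le_total a a' with h | h <;> rcases le_total b b' with h' | h' <;> simp [h, h'] <;>
      nlinarith [mul_nonneg (sub_nonneg.2 h) (sub_nonneg.2 h')]
  have hmn : ∀ a a' b b' : ℝ, max a a' * min b b' + min a a' * max b b' ≤ a * b + a' * b' := by
    intro a a' b b'
    rcases le_total a a' with h | h <;> rcases le_total b b' with h' | h' <;> simp [h, h'] <;>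
      nlinarith [mul_nonneg (sub_nonneg.2 h) (sub_nonneg.2 h')]
  gcongr ?_ + _
  rcases le_total (inner ℝ x e) c with hx | hx <;> rcases le_total (inner ℝ z e) c with hz | hz
  · rw [pol_of_le u hz, pol_of_le v hx, pol_hrefl_of_le he u hz, pol_hrefl_of_le he v hx]
    exact mul_le_mul_of_nonneg_right (hmm _ _ _ _)
      (sub_nonneg.2 (k1 (mul_nonneg (by linarith) (by linarith))))
  · rw [pol_of_ge u hz, pol_of_le v hx, pol_hrefl_of_ge he u hz, pol_hrefl_of_le he v hx]
    refine mul_le_mul_of_nonpos_right ?_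
      (sub_nonpos.2 (k2 (mul_nonpos_of_nonneg_of_nonpos (by linarith) (by linarith))))
    linarith [hmn (u z) (u (hrefl e c z)) (v x) (v (hrefl e c x)),
      hmn (v x) (v (hrefl e c x)) (u z) (u (hrefl e c z))]
  · rw [pol_of_le u hz, pol_of_ge v hx, pol_hrefl_of_le he u hz, pol_hrefl_of_ge he v hx]
    exact mul_le_mul_of_nonpos_right (hmn _ _ _ _)
      (sub_nonpos.2 (k2 (mul_nonpos_of_nonpos_of_nonneg (by linarith) (by linarith))))
  · rw [pol_of_ge u hz, pol_of_ge v hx, pol_hrefl_of_ge he u hz, pol_hrefl_of_ge he v hx]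
    refine mul_le_mul_of_nonneg_right ?_
      (sub_nonneg.2 (k1 (mul_nonneg_of_nonpos_of_nonpos (by linarith) (by linarith))))
    linarith [hmm (u z) (u (hrefl e c z)) (v x) (v (hrefl e c x))]

variable [FiniteDimensional ℝ E] [MeasurableSpace E] [BorelSpace E]

/-- The reflection `hrefl e c` as a measurable equivalence, its own inverse. -/
noncomputable def hreflEquiv {e : E} (he : ‖e‖ = 1) (c : ℝ) : E ≃ᵐ E where
  toFun := hrefl e c
  invFun := hrefl e c
  left_inv := hrefl_hrefl he c
  right_inv := hrefl_hrefl he c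
  measurable_toFun := (continuous_hrefl e c).measurable
  measurable_invFun := (continuous_hrefl e c).measurable

lemma measurePreserving_hrefl {e : E} (he : ‖e‖ = 1) (c : ℝ) :
    MeasurePreserving (hreflEquiv he c) (volume : Measure E) volume := by
  have h1 := (((ℝ ∙ e)ᗮ).reflection).measurePreserving
  have h2 := measurePreserving_add_right (volume : Measure E) ((2 * c) • e)
  have h3 := h2.comp h1
  have h4 : ⇑(hreflEquiv he c) = (fun x => x + (2 * c) • e) ∘ ⇑((ℝ ∙ e)ᗮ).reflection := by
    funext x
    change hrefl e c x = ((ℝ ∙ e)ᗮ).reflection x + (2 * c) • e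
    rw [Submodule.reflection_orthogonal_apply, Submodule.reflection_singleton_apply, hrefl, he,
      real_inner_comm]
    simp
    module
  rw [h4]
  exact h3

lemma integral_hrefl {e : E} (he : ‖e‖ = 1) (c : ℝ) (F : E → ℝ) :
    ∫ x, F (hrefl e c x) = ∫ x, F x :=
  (measurePreserving_hrefl he c).integral_comp' F

lemma integrable_hrefl {e : E} (he : ‖e‖ = 1) (c : ℝ) {F : E → ℝ} (hF : Integrable F) :
    Integrable fun x => F (hrefl e c x) :=
  (measurePreserving_hrefl he c).integrable_comp_of_integrable hF

/-- Folding an integral along the hyperplane, so that integrands can be compared pair by pair. -/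
lemma two_integral_hrefl {e : E} (he : ‖e‖ = 1) (c : ℝ) {F : E → ℝ} (hF : Integrable F) :
    ∫ x, (F x + F (hrefl e c x)) = 2 * ∫ x, F x := by
  rw [integral_add hF (integrable_hrefl he c hF), integral_hrefl he c F]; ring

/-! ### The Riesz form -/

/-- The Riesz trilinear form `∬ u z * v x * μ (x - z)`, with `p = (x, z)`. -/
noncomputable def riesz (μ u v : E → ℝ) : ℝ :=
  ∫ p : E × E, u p.2 * v p.1 * μ (p.1 - p.2)

/-- No regularity of `μ` is assumed: its superlevel sets are preimages of order-connected sets. -/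
lemma measurable_of_radDec {μ : E → ℝ} (hμ : ∀ x y, ‖x‖ ≤ ‖y‖ → μ y ≤ μ x) : Measurable μ := by
  refine measurable_of_Ioi fun a => ?_
  -- the superlevel set is the preimage under the norm of an order-connected set
  have : μ ⁻¹' Set.Ioi a = norm ⁻¹' {r : ℝ | ∃ x : E, r ≤ ‖x‖ ∧ a < μ x} := by
    ext x
    constructor
    · intro hx; exact ⟨x, le_rfl, hx⟩
    · rintro ⟨y, hy, hya⟩; exact lt_of_lt_of_le hya (hμ _ _ hy)
  rw [this]
  refine measurable_norm (Set.OrdConnected.measurableSet ⟨?_⟩)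
  rintro r - s ⟨y, hy, hya⟩ t ht
  exact ⟨y, ht.2.trans hy, hya⟩

lemma integrable_riesz {μ u v : E → ℝ} (hμ : ∀ x y, ‖x‖ ≤ ‖y‖ → μ y ≤ μ x) (hμ0 : ∀ x, 0 ≤ μ x)
    (hu : Integrable u) (hv : Integrable v) :
    Integrable fun p : E × E => u p.2 * v p.1 * μ (p.1 - p.2) := by
  have h1 : Integrable (fun p : E × E => v p.1 * u p.2) (volume.prod volume) := hv.mul_prod hu
  have h2 : Integrable (fun p : E × E => u p.2 * v p.1) := by
    exact h1.congr (Filter.Eventually.of_forall fun p => mul_comm _ _)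
  refine h2.mul_bdd (c := μ 0) ?_ ?_
  · exact ((measurable_of_radDec hμ).comp (measurable_fst.sub measurable_snd)).aestronglyMeasurable
  · refine Filter.Eventually.of_forall fun p => ?_
    rw [Real.norm_of_nonneg (hμ0 _)]
    exact hμ _ _ (by simp)

lemma riesz_eq_left {μ u v : E → ℝ} (hμ : ∀ x y, ‖x‖ ≤ ‖y‖ → μ y ≤ μ x) (hμ0 : ∀ x, 0 ≤ μ x)
    (hu : Integrable u) (hv : Integrable v) :
    riesz μ u v = ∫ x, v x * ∫ z, u z * μ (x - z) := by
  rw [riesz, Measure.volume_eq_prod, integral_prod _ (integrable_riesz hμ hμ0 hu hv)]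
  refine integral_congr_ae (Filter.Eventually.of_forall fun x => ?_)
  simp only
  rw [← integral_const_mul]
  congr 1; ext z; ring

lemma riesz_eq_right {μ u v : E → ℝ} (hμ : ∀ x y, ‖x‖ ≤ ‖y‖ → μ y ≤ μ x) (hμ0 : ∀ x, 0 ≤ μ x)
    (hu : Integrable u) (hv : Integrable v) :
    riesz μ u v = ∫ z, u z * ∫ x, v x * μ (x - z) := by
  rw [riesz, Measure.volume_eq_prod, integral_prod_symm _ (integrable_riesz hμ hμ0 hu hv)]
  refine integral_congr_ae (Filter.Eventually.of_forall fun x => ?_)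
  simp only
  rw [← integral_const_mul]
  congr 1; ext z; ring

lemma hasCompactSupport_of_norm {u : E → ℝ} {R : ℝ} (h : ∀ x, R ≤ ‖x‖ → u x = 0) :
    HasCompactSupport u := by
  refine HasCompactSupport.intro (isCompact_closedBall (0 : E) R) fun x hx => h x ?_
  simp at hx; exact hx.le

/-- Polarization towards the origin does not enlarge the centred ball containing the support. -/
lemma pol_zero {e : E} (he : ‖e‖ = 1) {c R : ℝ} (hc : 0 ≤ c) {u : E → ℝ} (hu0 : ∀ x, 0 ≤ u x)
    (h : ∀ x, R ≤ ‖x‖ → u x = 0) (x : E) (hx : R ≤ ‖x‖) : pol e c u x = 0 := by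
  rcases le_total (inner ℝ x e) c with h' | h'
  · have : ‖x‖ ≤ ‖hrefl e c x‖ := by
      have h1 := norm_hrefl_sq he c x
      have h2 : 0 ≤ c * (c - inner ℝ x e) := mul_nonneg hc (by linarith)
      exact (sq_le_sq₀ (norm_nonneg _) (norm_nonneg _)).1 (by linarith)
    rw [pol_of_le u h', h x hx, h _ (hx.trans this)]; simp
  · rw [pol_of_ge u h', h x hx]; simp [hu0]

lemma pol_nonneg {e : E} {c : ℝ} {u : E → ℝ} (hu0 : ∀ x, 0 ≤ u x) (x : E) : 0 ≤ pol e c u x := by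
  unfold pol; split_ifs
  · exact (hu0 x).trans (le_max_left _ _)
  · exact le_min (hu0 _) (hu0 _)

lemma pol_le {e : E} {c M : ℝ} {u : E → ℝ} (hu0 : ∀ x, u x ≤ M) (x : E) : pol e c u x ≤ M := by
  unfold pol; split_ifs
  · exact max_le (hu0 _) (hu0 _)
  · exact (min_le_left _ _).trans (hu0 _)

lemma integral_pol {e : E} (he : ‖e‖ = 1) {c : ℝ} {u : E → ℝ} (Φ : ℝ → ℝ)
    (h1 : Integrable fun x => Φ (u x)) (h2 : Integrable fun x => Φ (pol e c u x)) :
    ∫ x, Φ (pol e c u x) = ∫ x, Φ (u x) := by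
  have h3 := two_integral_hrefl he c h1
  have h4 := two_integral_hrefl he c h2
  simp only [pol_pair he] at h4
  linarith

/-- Polarizing both functions does not decrease the Riesz form. -/
lemma riesz_pol {e : E} (he : ‖e‖ = 1) {c : ℝ} {μ u v : E → ℝ}
    (hμ : ∀ x y, ‖x‖ ≤ ‖y‖ → μ y ≤ μ x) (hμ0 : ∀ x, 0 ≤ μ x)
    (hu : Integrable u) (hv : Integrable v)
    (hu' : Integrable (pol e c u)) (hv' : Integrable (pol e c v)) :
    riesz μ u v ≤ riesz μ (pol e c u) (pol e c v) := by
  have key : ∀ u v : E → ℝ, Integrable u → Integrable v →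
      Integrable (fun p : E × E => u p.2 * v p.1 * μ (p.1 - p.2) +
        u (hrefl e c p.2) * v (hrefl e c p.1) * μ (hrefl e c p.1 - hrefl e c p.2) +
        (u (hrefl e c p.2) * v p.1 * μ (p.1 - hrefl e c p.2) +
          u p.2 * v (hrefl e c p.1) * μ (hrefl e c p.1 - p.2))) ∧
      ∫ p : E × E, (u p.2 * v p.1 * μ (p.1 - p.2) +
        u (hrefl e c p.2) * v (hrefl e c p.1) * μ (hrefl e c p.1 - hrefl e c p.2) +
        (u (hrefl e c p.2) * v p.1 * μ (p.1 - hrefl e c p.2) +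
          u p.2 * v (hrefl e c p.1) * μ (hrefl e c p.1 - p.2))) = 4 * riesz μ u v := by
    intro u v hu hv
    have i0 := integrable_riesz hμ hμ0 hu hv
    have σ := measurePreserving_hrefl he c
    have ι : MeasurePreserving (MeasurableEquiv.refl E) (volume : Measure E) volume :=
      MeasurePreserving.id volume
    have m1 : MeasurePreserving ((hreflEquiv he c).prodCongr (hreflEquiv he c))
      (volume : Measure (E × E)) volume := σ.prod σ
    have m2 : MeasurePreserving ((MeasurableEquiv.refl E).prodCongr (hreflEquiv he c))
      (volume : Measure (E × E)) volume := ι.prod σ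
    have m3 : MeasurePreserving ((hreflEquiv he c).prodCongr (MeasurableEquiv.refl E))
      (volume : Measure (E × E)) volume := σ.prod ι
    have i1 := m1.integrable_comp_of_integrable i0
    have i2 := m2.integrable_comp_of_integrable i0
    have i3 := m3.integrable_comp_of_integrable i0
    have e1 := m1.integral_comp' (fun p : E × E => u p.2 * v p.1 * μ (p.1 - p.2))
    have e2 := m2.integral_comp' (fun p : E × E => u p.2 * v p.1 * μ (p.1 - p.2))
    have e3 := m3.integral_comp' (fun p : E × E => u p.2 * v p.1 * μ (p.1 - p.2))
    refine ⟨(i0.add i1).add (i2.add i3), ?_⟩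
    refine (integral_add (i0.add i1) (i2.add i3)).trans ?_
    refine (congrArg₂ (· + ·) (integral_add i0 i1) (integral_add i2 i3)).trans ?_
    refine (congrArg₂ (· + ·) (congrArg₂ (· + ·) rfl e1) (congrArg₂ (· + ·) e2 e3)).trans ?_
    rw [riesz]; ring
  obtain ⟨i1, e1⟩ := key u v hu hv
  obtain ⟨i2, e2⟩ := key _ _ hu' hv'
  have := integral_mono i1 i2 fun p => pol_kernel he (c := c) u v μ hμ p.1 p.2
  rw [e1, e2] at this
  linarith

/-- The convolution of two radially non-increasing functions is radially non-increasing: fold both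
integrals along the perpendicular bisector of `x` and `y`, and use `a b + a' b' ≥ a b' + a' b` for
similarly ordered pairs. -/
lemma radDec_conv {μ v : E → ℝ}
    (hμ : ∀ x y, ‖x‖ ≤ ‖y‖ → μ y ≤ μ x) (hμ0 : ∀ x, 0 ≤ μ x)
    (hv : ∀ x y, ‖x‖ ≤ ‖y‖ → v y ≤ v x) (hvi : Integrable v) (x y : E) (hxy : ‖x‖ ≤ ‖y‖) :
    ∫ p, v p * μ (p - y) ≤ ∫ p, v p * μ (p - x) := by
  rcases eq_or_ne x y with rfl | hne
  · rfl
  obtain ⟨e, c, he, hc, -, hs, hxc⟩ := exists_hrefl_swap hne hxy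
  have hi : ∀ w, Integrable fun p => v p * μ (p - w) := by
    intro w
    refine hvi.mul_bdd (c := μ 0) ?_ ?_
    · exact ((measurable_of_radDec hμ).comp (measurable_id.sub_const w)).aestronglyMeasurable
    · refine Filter.Eventually.of_forall fun p => ?_
      rw [Real.norm_of_nonneg (hμ0 _)]
      exact hμ _ _ (by simp)
  have h1 := two_integral_hrefl he c (hi x)
  have h2 := two_integral_hrefl he c (hi y)
  have hle : ∫ p, (v p * μ (p - y) + v (hrefl e c p) * μ (hrefl e c p - y)) ≤
      ∫ p, (v p * μ (p - x) + v (hrefl e c p) * μ (hrefl e c p - x)) := by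
    refine integral_mono ((hi y).add (integrable_hrefl he c (hi y)))
      ((hi x).add (integrable_hrefl he c (hi x))) fun p => ?_
    have e1 : μ (hrefl e c p - x) = μ (p - y) := by
      have : ‖hrefl e c p - x‖ = ‖p - y‖ := by rw [norm_hrefl_sub he, hs]
      exact le_antisymm (hμ _ _ this.ge) (hμ _ _ this.le)
    have e2 : μ (hrefl e c p - y) = μ (p - x) := by
      have : ‖hrefl e c p - y‖ = ‖p - x‖ := by rw [← hs, norm_hrefl_sub_hrefl he]
      exact le_antisymm (hμ _ _ this.ge) (hμ _ _ this.le)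
    simp only [e1, e2]
    have hsq := norm_hrefl_sq he c p
    rcases le_total (inner ℝ p e) c with h | h
    · have a1 : v (hrefl e c p) ≤ v p := by
        refine hv _ _ ((sq_le_sq₀ (norm_nonneg _) (norm_nonneg _)).1 ?_)
        nlinarith [mul_nonneg hc (sub_nonneg.2 h)]
      have a2 : μ (p - y) ≤ μ (p - x) := by
        refine hμ _ _ ?_
        rw [← hs]
        exact norm_sub_le_norm_sub_hrefl he (mul_nonneg (by linarith) (by linarith))
      nlinarith [mul_nonneg (sub_nonneg.2 a1) (sub_nonneg.2 a2)]
    · have a1 : v p ≤ v (hrefl e c p) := by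
        refine hv _ _ ((sq_le_sq₀ (norm_nonneg _) (norm_nonneg _)).1 ?_)
        nlinarith [mul_nonneg hc (sub_nonneg.2 h)]
      have a2 : μ (p - x) ≤ μ (p - y) := by
        refine hμ _ _ ?_
        rw [← hs]
        exact norm_sub_hrefl_le_norm_sub he
          (mul_nonpos_of_nonpos_of_nonneg (by linarith) (by linarith))
      nlinarith [mul_nonneg (sub_nonneg.2 a1) (sub_nonneg.2 a2)]
  linarith

/-! ### Symmetrization by compactness -/

/-- The non-negative functions that vanish outside the ball of radius `R` and inherit from `f` the
upper bounds and the modulus of continuity. The class is stable under polarization (for `0 ≤ c`)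
and, for uniformly continuous bounded `f`, compact. -/
structure Dominated (f : E → ℝ) (R : ℝ) (u : E → ℝ) : Prop where
  nonneg : ∀ x, 0 ≤ u x
  le_of_le : ∀ M, (∀ x, f x ≤ M) → ∀ x, u x ≤ M
  zero : ∀ x, R ≤ ‖x‖ → u x = 0
  modulus : ∀ δ ε, (∀ x y, ‖x - y‖ ≤ δ → |f x - f y| ≤ ε) → ∀ x y, ‖x - y‖ ≤ δ → |u x - u y| ≤ ε

lemma Dominated.pol {f : E → ℝ} {R : ℝ} {u : E → ℝ} (hu : Dominated f R u) {e : E} (he : ‖e‖ = 1)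
    {c : ℝ} (hc : 0 ≤ c) : Dominated f R (pol e c u) where
  nonneg := pol_nonneg hu.nonneg
  le_of_le M hM := pol_le (hu.le_of_le M hM)
  zero := pol_zero he hc hu.nonneg hu.zero
  modulus δ ε h := pol_modulus he (hu.modulus δ ε h)

lemma uniform_modulus {f : E → ℝ} (hf : UniformContinuous f) {ε : ℝ} (hε : 0 < ε) :
    ∃ δ > 0, ∀ x y, ‖x - y‖ ≤ δ → |f x - f y| ≤ ε := by
  obtain ⟨δ, hδ, h⟩ := Metric.uniformContinuous_iff.1 hf ε hε
  refine ⟨δ / 2, by positivity, fun x y hxy => ?_⟩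
  have := h (a := x) (b := y) (by rw [dist_eq_norm]; linarith)
  rw [Real.dist_eq] at this
  exact this.le

lemma Dominated.uniformContinuous {f : E → ℝ} {R : ℝ} {u : E → ℝ} (hu : Dominated f R u)
    (hf : UniformContinuous f) : UniformContinuous u := by
  refine Metric.uniformContinuous_iff.2 fun ε hε => ?_
  obtain ⟨δ, hδ, h⟩ := uniform_modulus hf (half_pos hε)
  refine ⟨δ, hδ, fun x y hxy => ?_⟩
  have := hu.modulus _ _ h x y (by rw [← dist_eq_norm]; exact hxy.le)
  rw [Real.dist_eq]
  linarith

/-- Arzelà–Ascoli for the compact-open topology. -/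
lemma isCompact_dominated {f : E → ℝ} (hf : UniformContinuous f) {M : ℝ} (hM : ∀ x, f x ≤ M)
    (R : ℝ) : IsCompact {u : C(E, ℝ) | Dominated f R u} := by
  refine ArzelaAscoli.isCompact_of_equicontinuous _ ?_ ?_
  · have himg : ContinuousMap.toFun '' {u : C(E, ℝ) | Dominated f R u} =
        {u : E → ℝ | Dominated f R u} := by
      ext u
      constructor
      · rintro ⟨v, hv, rfl⟩; exact hv
      · intro hu; exact ⟨⟨u, (Dominated.uniformContinuous hu hf).continuous⟩, hu, rfl⟩
    rw [himg]
    refine (isCompact_univ_pi fun _ : E => isCompact_Icc (a := (0 : ℝ)) (b := M)).of_isClosed_subset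
      ?_ fun u hu x _ => ⟨hu.nonneg x, hu.le_of_le M hM x⟩
    have : {u : E → ℝ | Dominated f R u} =
        {u | ∀ x, 0 ≤ u x} ∩ {u | ∀ M, (∀ x, f x ≤ M) → ∀ x, u x ≤ M} ∩
        {u | ∀ x, R ≤ ‖x‖ → u x = 0} ∩
        {u | ∀ δ ε, (∀ x y, ‖x - y‖ ≤ δ → |f x - f y| ≤ ε) →
          ∀ x y, ‖x - y‖ ≤ δ → |u x - u y| ≤ ε} := by
      ext u
      constructor
      · intro h; exact ⟨⟨⟨h.1, h.2⟩, h.3⟩, h.4⟩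
      · rintro ⟨⟨⟨h1, h2⟩, h3⟩, h4⟩; exact ⟨h1, h2, h3, h4⟩
    rw [this]
    simp only [Set.ofPred_forall]
    refine ((IsClosed.inter ?_ ?_).inter ?_).inter ?_
    · exact isClosed_iInter fun x => isClosed_le continuous_const (continuous_apply x)
    · exact isClosed_iInter fun M => isClosed_iInter fun _ => isClosed_iInter fun x =>
        isClosed_le (continuous_apply x) continuous_const
    · exact isClosed_iInter fun x => isClosed_iInter fun _ =>
        isClosed_eq (continuous_apply x) continuous_const
    · exact isClosed_iInter fun _ => isClosed_iInter fun _ => isClosed_iInter fun _ =>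
        isClosed_iInter fun x => isClosed_iInter fun y => isClosed_iInter fun _ =>
        isClosed_le (((continuous_apply x).sub (continuous_apply y)).abs) continuous_const
  · intro x₀
    refine Metric.equicontinuousAt_iff.2 fun ε hε => ?_
    obtain ⟨δ, hδ, h⟩ := uniform_modulus hf (half_pos hε)
    refine ⟨δ, hδ, fun x hx u => ?_⟩
    have := u.2.modulus _ _ h x₀ x (by rw [← dist_eq_norm, dist_comm]; exact hx.le)
    rw [Real.dist_eq]
    exact this.trans_lt (half_lt_self hε)

/-- The linear growth bound on `Φ` provides the dominating function. With `Φ x t = max (t - s) 0` this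
covers the hinge integrals, with `Φ x t = t * ‖x‖ ^ 2` the second moment. -/
lemma continuous_integral_dominated {f : E → ℝ} {M : ℝ} (hM : ∀ x, f x ≤ M)
    {R : ℝ} (Φ : E → ℝ → ℝ) (hΦ : Continuous (Function.uncurry Φ)) {C : ℝ}
    (hC : ∀ x t, ‖x‖ ≤ R → 0 ≤ t → |Φ x t| ≤ C * t) (hC0 : 0 ≤ C) (hΦ0 : ∀ x, Φ x 0 = 0) :
    Continuous fun u : {u : C(E, ℝ) | Dominated f R u} => ∫ x, Φ x (u.1 x) := by
  refine continuous_of_dominated (bound := (Metric.closedBall (0 : E) R).indicator fun _ => C * M)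
    ?_ ?_ ?_ ?_
  · intro u
    exact (hΦ.comp (continuous_id.prodMk u.1.continuous)).aestronglyMeasurable
  · intro u
    refine Filter.Eventually.of_forall fun x => ?_
    by_cases hx : ‖x‖ ≤ R
    · rw [Set.indicator_of_mem (by simpa using hx)]
      exact (hC x _ hx (u.2.nonneg x)).trans
        (mul_le_mul_of_nonneg_left (u.2.le_of_le M hM x) hC0)
    · rw [Set.indicator_of_notMem (by simpa using hx), u.2.zero x (not_le.1 hx).le, hΦ0]; simp
  · exact (integrable_indicator_iff measurableSet_closedBall).2
      (integrableOn_const measure_closedBall_lt_top.ne)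
  · refine Filter.Eventually.of_forall fun x => ?_
    have h1 : Continuous fun u : {u : C(E, ℝ) | Dominated f R u} => u.1 x :=
      (continuous_eval_const x).comp continuous_subtype_val
    exact hΦ.comp (continuous_const.prodMk h1)

lemma continuous_riesz_dominated {μ f h : E → ℝ} {M N : ℝ}
    (hμ : ∀ x y, ‖x‖ ≤ ‖y‖ → μ y ≤ μ x) (hμ0 : ∀ x, 0 ≤ μ x)
    (hM : ∀ x, f x ≤ M) (hN : ∀ x, h x ≤ N) (hN0 : 0 ≤ N) {R : ℝ} :
    Continuous fun p : {u : C(E, ℝ) | Dominated f R u} × {u : C(E, ℝ) | Dominated h R u} =>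
      riesz μ p.1.1 p.2.1 := by
  have hμm : Measurable fun p : E × E => μ (p.1 - p.2) :=
    (measurable_of_radDec hμ).comp (measurable_fst.sub measurable_snd)
  refine continuous_of_dominated
    (bound := (Metric.closedBall (0 : E) R ×ˢ Metric.closedBall (0 : E) R).indicator
      fun _ => M * N * μ 0) ?_ ?_ ?_ ?_
  · intro p
    have h1 : Continuous fun q : E × E => p.1.1 q.2 * p.2.1 q.1 := by fun_prop
    exact (h1.measurable.mul hμm).aestronglyMeasurable
  · intro p
    refine Filter.Eventually.of_forall fun q => ?_
    by_cases h1 : ‖q.1‖ ≤ R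
    · by_cases h2 : ‖q.2‖ ≤ R
      · rw [Set.indicator_of_mem (by simp [h1, h2]), Real.norm_of_nonneg
          (mul_nonneg (mul_nonneg (p.1.2.nonneg _) (p.2.2.nonneg _)) (hμ0 _))]
        have hM0 : 0 ≤ M := (p.1.2.nonneg q.2).trans (p.1.2.le_of_le M hM _)
        exact mul_le_mul (mul_le_mul (p.1.2.le_of_le M hM _) (p.2.2.le_of_le N hN _)
          (p.2.2.nonneg _) hM0) (hμ _ _ (by simp)) (hμ0 _) (mul_nonneg hM0 hN0)
      · rw [Set.indicator_of_notMem (by simp [h2]), p.1.2.zero _ (not_le.1 h2).le]; simp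
    · rw [Set.indicator_of_notMem (by simp [h1]), p.2.2.zero _ (not_le.1 h1).le]; simp
  · refine (integrable_indicator_iff
      (measurableSet_closedBall.prod measurableSet_closedBall)).2 (integrableOn_const ?_)
    exact ((isCompact_closedBall _ _).prod (isCompact_closedBall _ _)).measure_lt_top.ne
  · refine Filter.Eventually.of_forall fun q => ?_
    have h1 : Continuous fun p : {u : C(E, ℝ) | Dominated f R u} × {u : C(E, ℝ) | Dominated h R u}
        => p.1.1 q.2 :=
      ((continuous_eval_const _).comp continuous_subtype_val).comp continuous_fst
    have h2 : Continuous fun p : {u : C(E, ℝ) | Dominated f R u} × {u : C(E, ℝ) | Dominated h R u}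
        => p.2.1 q.1 :=
      ((continuous_eval_const _).comp continuous_subtype_val).comp continuous_snd
    exact (h1.mul h2).mul continuous_const

/-- Polarization towards the origin does not increase the second moment, and it leaves the second
moment unchanged only if `u` already equals its polarization. This strictness turns a minimizer of
the second moment into a radially non-increasing function. -/
lemma moment_pol {e : E} (he : ‖e‖ = 1) {c R : ℝ} (hc : 0 < c) {u : E → ℝ} (hu : Continuous u)
    (hu0 : ∀ x, 0 ≤ u x) (hR : ∀ x, R ≤ ‖x‖ → u x = 0) :
    ∫ x, pol e c u x * ‖x‖ ^ 2 ≤ ∫ x, u x * ‖x‖ ^ 2 ∧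
    (∫ x, u x * ‖x‖ ^ 2 ≤ ∫ x, pol e c u x * ‖x‖ ^ 2 → ∀ x, inner ℝ x e < c →
      u (hrefl e c x) ≤ u x) := by
  have hwi : ∀ v : E → ℝ, Continuous v → (∀ x, R ≤ ‖x‖ → v x = 0) →
      Integrable fun x => v x * ‖x‖ ^ 2 := by
    intro v hv hvR
    refine Continuous.integrable_of_hasCompactSupport (by fun_prop)
      (hasCompactSupport_of_norm (R := R) fun x hx => ?_)
    rw [hvR x hx, zero_mul]
  have hp : Continuous (pol e c u) := continuous_pol hu
  have hσ := continuous_hrefl e c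
  have i1 := hwi u hu hR
  have i2 := hwi _ hp (pol_zero he hc.le hu0 hR)
  have e1 := two_integral_hrefl he c i1
  have e2 := two_integral_hrefl he c i2
  have j1 := i1.add (integrable_hrefl he c i1)
  have j2 := i2.add (integrable_hrefl he c i2)
  have hD : ∀ x, (u x * ‖x‖ ^ 2 + u (hrefl e c x) * ‖hrefl e c x‖ ^ 2) -
      (pol e c u x * ‖x‖ ^ 2 + pol e c u (hrefl e c x) * ‖hrefl e c x‖ ^ 2) =
      (pol e c u x - u x) * (4 * c * (c - inner ℝ x e)) := by
    intro x
    have s1 := pol_pair he c u id x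
    simp only [id] at s1
    rw [norm_hrefl_sq he]
    linear_combination (-(‖x‖ ^ 2 + 4 * c * (c - inner ℝ x e))) * s1
  have hD0 : 0 ≤ fun x => (pol e c u x - u x) * (4 * c * (c - inner ℝ x e)) := by
    intro x
    simp only [Pi.zero_apply]
    rcases le_total (inner ℝ x e) c with h | h
    · rw [pol_of_le u h]
      exact mul_nonneg (sub_nonneg.2 (le_max_left _ _))
        (mul_nonneg (by positivity) (by linarith))
    · rw [pol_of_ge u h]
      exact mul_nonneg_of_nonpos_of_nonpos (sub_nonpos.2 (min_le_left _ _))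
        (mul_nonpos_of_nonneg_of_nonpos (by positivity) (by linarith))
  have hDi : Integrable fun x => (pol e c u x - u x) * (4 * c * (c - inner ℝ x e)) :=
    (j1.sub j2).congr (Filter.Eventually.of_forall hD)
  have hI : ∫ x, (pol e c u x - u x) * (4 * c * (c - inner ℝ x e)) =
      2 * (∫ x, u x * ‖x‖ ^ 2) - 2 * ∫ x, pol e c u x * ‖x‖ ^ 2 := by
    rw [← e1, ← e2]
    exact (integral_congr_ae (Filter.Eventually.of_forall fun x => (hD x).symm)).trans
      (integral_sub j1 j2)
  have hI0 := integral_nonneg (μ := volume) hD0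
  refine ⟨by linarith, fun hle x hx => ?_⟩
  have hz : ∫ x, (pol e c u x - u x) * (4 * c * (c - inner ℝ x e)) = 0 := by linarith
  have hae := (integral_eq_zero_iff_of_nonneg (μ := volume) hD0 hDi).1 hz
  have heq := (Continuous.ae_eq_iff_eq (volume : Measure E) (by fun_prop) continuous_zero).1 hae
  have hx0 := congrFun heq x
  simp only [Pi.zero_apply, mul_eq_zero] at hx0
  have : pol e c u x = u x := by
    rcases hx0 with h | h
    · linarith
    · rcases h with (h | h) | h <;> linarith
  rw [pol_of_le u hx.le] at this
  rw [← this]; exact le_max_right _ _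

/-- Strict norm inequalities suffice for a continuous function, which settles points of equal norm
without polarizing in hyperplanes through the origin. -/
lemma radDec_of_lt {u : E → ℝ} (hu : Continuous u) (h : ∀ x y, ‖x‖ < ‖y‖ → u y ≤ u x)
    (x y : E) (hxy : ‖x‖ ≤ ‖y‖) : u y ≤ u x := by
  rcases hxy.lt_or_eq with hlt | heq
  · exact h x y hlt
  rcases eq_or_ne y 0 with rfl | hy
  · rw [norm_zero, norm_eq_zero] at heq; rw [heq]
  have hy' : 0 < ‖y‖ := norm_pos_iff.2 hy
  -- approach `x` along the open segment from the origin
  have ht : Filter.Tendsto (fun t : ℝ => u (t • x)) (nhdsWithin 1 (Set.Iio 1)) (nhds (u x)) := by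
    have : Continuous fun t : ℝ => u (t • x) := by fun_prop
    have := (this.tendsto 1).mono_left (nhdsWithin_le_nhds (s := Set.Iio 1))
    simpa using this
  refine ge_of_tendsto ht ?_
  filter_upwards [Ioo_mem_nhdsLT (zero_lt_one (α := ℝ))] with t ht
  refine h _ _ ?_
  rw [norm_smul, Real.norm_of_nonneg ht.1.le, heq]
  exact mul_lt_of_lt_one_left hy' ht.2

/-- Simultaneous symmetrization. Among the pairs in the compact classes of `f` and `h` with the
same hinge integrals as `f` and `h` and at least the same Riesz form, a pair minimizing the total
second moment is fixed by all polarizations with `0 < c`, hence radially non-increasing. -/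
lemma exists_symm {μ f h : E → ℝ}
    (hμ : ∀ x y, ‖x‖ ≤ ‖y‖ → μ y ≤ μ x) (hμ0 : ∀ x, 0 ≤ μ x)
    (hf : Continuous f) (hfs : HasCompactSupport f) (hf0 : ∀ x, 0 ≤ f x)
    (hh : Continuous h) (hhs : HasCompactSupport h) (hh0 : ∀ x, 0 ≤ h x) (hh1 : ∀ x, h x ≤ 1) :
    ∃ f' h' : E → ℝ, Integrable f' ∧ Integrable h' ∧
      Continuous f' ∧ (∀ x, 0 ≤ f' x) ∧ (∀ x, 0 ≤ h' x) ∧ (∀ x, h' x ≤ 1) ∧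
      (∀ x y, ‖x‖ ≤ ‖y‖ → f' y ≤ f' x) ∧ (∀ x y, ‖x‖ ≤ ‖y‖ → h' y ≤ h' x) ∧
      (∀ s, 0 ≤ s → ∫ x, max (f' x - s) 0 = ∫ x, max (f x - s) 0) ∧
      ∫ x, h' x = ∫ x, h x ∧ riesz μ f h ≤ riesz μ f' h' := by
  obtain ⟨R, hRf, hRh⟩ : ∃ R, (∀ x, R ≤ ‖x‖ → f x = 0) ∧ (∀ x, R ≤ ‖x‖ → h x = 0) := by
    obtain ⟨R, hR⟩ := (hfs.isCompact.union hhs.isCompact).isBounded.subset_closedBall (0 : E)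
    refine ⟨R + 1, fun x hx => ?_, fun x hx => ?_⟩ <;>
    · refine image_eq_zero_of_notMem_tsupport fun hmem => ?_
      have := hR (by first | exact Or.inl hmem | exact Or.inr hmem)
      rw [mem_closedBall_zero_iff] at this
      linarith
  obtain ⟨M, hM⟩ : ∃ M, ∀ x, f x ≤ M := by
    obtain ⟨M, hM⟩ := hfs.exists_bound_of_continuous hf
    exact ⟨M, fun x => (le_abs_self _).trans (hM x)⟩
  set X := {u : C(E, ℝ) | Dominated f R u} × {u : C(E, ℝ) | Dominated h R u}
  have : CompactSpace {u : C(E, ℝ) | Dominated f R u} := isCompact_iff_compactSpace.1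
    (isCompact_dominated (hfs.uniformContinuous_of_continuous hf) hM R)
  have : CompactSpace {u : C(E, ℝ) | Dominated h R u} := isCompact_iff_compactSpace.1
    (isCompact_dominated (hhs.uniformContinuous_of_continuous hh) hh1 R)
  have hpos : ∀ s : ℝ, Continuous (Function.uncurry fun (_ : E) t => max (t - s) 0) :=
    fun s => by fun_prop
  have hposC : ∀ s : ℝ, 0 ≤ s → ∀ (x : E) (t : ℝ), ‖x‖ ≤ R → 0 ≤ t → |max (t - s) 0| ≤ 1 * t := by
    intro s hs _ t _ ht
    rw [abs_of_nonneg (le_max_right _ _), one_mul]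
    exact max_le (by linarith) ht
  have hmom : Continuous (Function.uncurry fun (x : E) (t : ℝ) => t * ‖x‖ ^ 2) := by fun_prop
  have hmomC : ∀ (x : E) (t : ℝ), ‖x‖ ≤ R → 0 ≤ t → |t * ‖x‖ ^ 2| ≤ R ^ 2 * t := by
    intro x t hx ht
    rw [abs_of_nonneg (by positivity), mul_comm]
    gcongr
  let T : Set X := {p | (∀ s, 0 ≤ s → ∫ x, max (p.1.1 x - s) 0 = ∫ x, max (f x - s) 0) ∧
    (∀ s, 0 ≤ s → ∫ x, max (p.2.1 x - s) 0 = ∫ x, max (h x - s) 0) ∧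
    riesz μ f h ≤ riesz μ p.1.1 p.2.1}
  have hT : IsClosed T := by
    have hT' : T = {p | ∀ s, 0 ≤ s → ∫ x, max (p.1.1 x - s) 0 = ∫ x, max (f x - s) 0} ∩
      ({p | ∀ s, 0 ≤ s → ∫ x, max (p.2.1 x - s) 0 = ∫ x, max (h x - s) 0} ∩
        {p | riesz μ f h ≤ riesz μ p.1.1 p.2.1}) := rfl
    rw [hT']
    simp only [Set.ofPred_forall]
    refine IsClosed.inter ?_ (IsClosed.inter ?_ ?_)
    · exact isClosed_iInter fun s => isClosed_iInter fun hs => isClosed_eq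
        ((continuous_integral_dominated hM _ (hpos s) (hposC s hs) zero_le_one
          (by simp [hs])).comp continuous_fst) continuous_const
    · exact isClosed_iInter fun s => isClosed_iInter fun hs => isClosed_eq
        ((continuous_integral_dominated hh1 _ (hpos s) (hposC s hs) zero_le_one
          (by simp [hs])).comp continuous_snd) continuous_const
    · exact isClosed_le continuous_const
        (continuous_riesz_dominated hμ hμ0 hM hh1 zero_le_one)
  have hL : Continuous fun p : X => (∫ x, p.1.1 x * ‖x‖ ^ 2) + ∫ x, p.2.1 x * ‖x‖ ^ 2 :=
    ((continuous_integral_dominated hM _ hmom hmomC (sq_nonneg R) (by simp)).comp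
      continuous_fst).add
    ((continuous_integral_dominated hh1 _ hmom hmomC (sq_nonneg R) (by simp)).comp
      continuous_snd)
  have hne : T.Nonempty :=
    ⟨(⟨⟨f, hf⟩, ⟨hf0, fun _ h => h, hRf, fun _ _ h => h⟩⟩,
      ⟨⟨h, hh⟩, ⟨hh0, fun _ h => h, hRh, fun _ _ h => h⟩⟩),
      fun _ _ => rfl, fun _ _ => rfl, le_rfl⟩
  -- the minimizer of the second moment
  obtain ⟨⟨u, v⟩, ⟨hu, hv, huv⟩, hmin⟩ := hT.isCompact.exists_isMinOn hne hL.continuousOn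
  have hwi : ∀ w : E → ℝ, Continuous w → (∀ x, R ≤ ‖x‖ → w x = 0) → Integrable w :=
    fun w hw hw0 => hw.integrable_of_hasCompactSupport (hasCompactSupport_of_norm hw0)
  have hwi' : ∀ w : E → ℝ, Continuous w → (∀ x, R ≤ ‖x‖ → w x = 0) → ∀ s, 0 ≤ s →
      Integrable fun x => max (w x - s) 0 := by
    intro w hw hw0 s hs
    refine hwi _ (by fun_prop) fun x hx => ?_
    simp [hw0 x hx, hs]
  have hcu := u.1.continuous
  have hcv := v.1.continuous
  have hzu := u.2.zero
  have hzv := v.2.zero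
  -- its polarizations are competitors, so minimality forces equality in `moment_pol`
  have hpol : ∀ (e : E) (c : ℝ), ‖e‖ = 1 → 0 < c → ∀ x, inner ℝ x e < c →
      u.1 (hrefl e c x) ≤ u.1 x ∧ v.1 (hrefl e c x) ≤ v.1 x := by
    intro e c he hc x hx
    have hpu := u.2.pol he hc.le
    have hpv := v.2.pol he hc.le
    have hcpu := continuous_pol (e := e) (c := c) hcu
    have hcpv := continuous_pol (e := e) (c := c) hcv
    have hmem : ((⟨⟨_, hcpu⟩, hpu⟩, ⟨⟨_, hcpv⟩, hpv⟩) : X) ∈ T := by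
      refine ⟨fun s hs => ?_, fun s hs => ?_, ?_⟩
      · rw [← hu s hs]
        exact integral_pol he (fun t => max (t - s) 0) (hwi' _ hcu hzu s hs)
          (hwi' _ hcpu hpu.zero s hs)
      · rw [← hv s hs]
        exact integral_pol he (fun t => max (t - s) 0) (hwi' _ hcv hzv s hs)
          (hwi' _ hcpv hpv.zero s hs)
      · exact huv.trans (riesz_pol he hμ hμ0 (hwi _ hcu hzu) (hwi _ hcv hzv)
          (hwi _ hcpu hpu.zero) (hwi _ hcpv hpv.zero))
    have hle := hmin hmem
    simp only [Set.mem_ofPred_eq, ContinuousMap.coe_mk] at hle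
    have mu := moment_pol he hc hcu u.2.nonneg hzu
    have mv := moment_pol he hc hcv v.2.nonneg hzv
    exact ⟨mu.2 (by linarith [mv.1]) x hx, mv.2 (by linarith [mu.1]) x hx⟩
  have hlt : ∀ x y, ‖x‖ < ‖y‖ → u.1 y ≤ u.1 x ∧ v.1 y ≤ v.1 x := by
    intro x y hxy
    obtain ⟨e, c, he, -, hc, hs, hx⟩ := exists_hrefl_swap (x := x) (y := y)
      (fun h => by simp [h] at hxy) hxy.le
    rw [← hs]
    exact hpol e c he (hc hxy) x hx
  refine ⟨u.1, v.1, hwi _ hcu hzu, hwi _ hcv hzv, hcu, u.2.nonneg, v.2.nonneg,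
    v.2.le_of_le 1 hh1, radDec_of_lt hcu fun x y h => (hlt x y h).1,
    radDec_of_lt hcv fun x y h => (hlt x y h).2, hu, ?_, huv⟩
  have := hv 0 le_rfl
  simpa [max_eq_left, v.2.nonneg, hh0] using this

/-! ### Majorization and hinge inequalities -/

lemma lintegral_le_of_forall_ball {F : E → ℝ≥0∞} {D : Set E} {A : ℝ≥0∞}
    (h : ∀ k : ℕ, ∫⁻ x in D ∩ Metric.ball 0 k, F x ≤ A) : ∫⁻ x in D, F x ≤ A := by
  have h1 : D = ⋃ k : ℕ, D ∩ Metric.ball (0 : E) k := by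
    rw [← Set.inter_iUnion, Metric.iUnion_ball_nat, Set.inter_univ]
  have hmono : Monotone fun k : ℕ => D ∩ Metric.ball (0 : E) k := fun i j hij =>
    Set.inter_subset_inter_right _ (Metric.ball_subset_ball (by exact_mod_cast hij))
  rw [h1, setLIntegral_iUnion_of_directed _ hmono.directed_le]
  exact iSup_le h

lemma ofReal_le_sub_add (a s : ℝ) :
    ENNReal.ofReal a ≤ ENNReal.ofReal (a - s) + ENNReal.ofReal s := by
  have := ENNReal.ofReal_add_le (p := a - s) (q := s)
  simpa using this

/-- On a centred ball `D` (possibly closed) the positive part of the radially non-increasing `g` is at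
least some level `t`, and off `D` it is at most `t`, so the hinge bound at level `t` bounds `∫ f`
over `D`. The bound is applied at `t + δ`, since `t` may be `0`. The slack `η` absorbs approximation errors. -/
lemma setLIntegral_le_of_hinge_of_finite {f g : E → ℝ} {η : ℝ≥0∞}
    (hg : ∀ x y, ‖x‖ ≤ ‖y‖ → g y ≤ g x)
    (hinge : ∀ s : ℝ, 0 < s → ∫⁻ x, ENNReal.ofReal (f x - s) ≤
      (∫⁻ x, ENNReal.ofReal (g x - s)) + η)
    {D : Set E} (hDm : MeasurableSet D) (hD : ∀ x ∈ D, ∀ y, ‖y‖ ≤ ‖x‖ → y ∈ D)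
    (hDfin : volume D ≠ ∞) :
    ∫⁻ x in D, ENNReal.ofReal (f x) ≤ (∫⁻ x in D, ENNReal.ofReal (g x)) + η := by
  -- `t` is the supremum of `g⁺` off `D`, and `0` if `D` is the whole space
  obtain ⟨t, ht0, htD, htDc⟩ : ∃ t : ℝ, 0 ≤ t ∧ (∀ x ∈ D, t ≤ max (g x) 0) ∧
      ∀ x ∉ D, g x ≤ t := by
    refine ⟨⨆ x : ↥Dᶜ, max (g x) 0, Real.iSup_nonneg fun x => le_max_right _ _, ?_, ?_⟩
    · intro x hx
      refine Real.iSup_le (fun y => ?_) (le_max_right _ _)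
      refine max_le_max (hg _ _ ?_) le_rfl
      by_contra hlt
      exact y.2 (hD x hx _ (not_le.1 hlt).le)
    · intro x hx
      have hb : BddAbove (Set.range fun x : ↥Dᶜ => max (g x) 0) := by
        refine ⟨max (g 0) 0, ?_⟩
        rintro _ ⟨y, rfl⟩
        exact max_le_max (hg _ _ (by simp)) le_rfl
      exact (le_max_left _ _).trans (le_ciSup hb ⟨x, hx⟩)
  have hsub : ∫⁻ x, ENNReal.ofReal (g x - t) = ∫⁻ x in D, ENNReal.ofReal (g x - t) := by
    rw [← lintegral_indicator hDm]
    refine lintegral_congr fun x => ?_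
    by_cases hx : x ∈ D
    · rw [Set.indicator_of_mem hx]
    · rw [Set.indicator_of_notMem hx]
      exact ENNReal.ofReal_of_nonpos (by linarith [htDc x hx])
  have hadd : (∫⁻ x in D, ENNReal.ofReal (g x - t)) + ENNReal.ofReal t * volume D =
      ∫⁻ x in D, ENNReal.ofReal (g x) := by
    rw [← setLIntegral_const, ← lintegral_add_right _ measurable_const]
    refine setLIntegral_congr_fun hDm fun x hx => ?_
    have := htD x hx
    rcases le_total (g x) 0 with h0 | h0
    · rw [max_eq_right h0] at this
      have ht : t = 0 := le_antisymm this ht0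
      simp [ht]
    · rw [max_eq_left h0] at this
      rw [← ENNReal.ofReal_add (by linarith) ht0, sub_add_cancel]
  refine ENNReal.le_of_forall_pos_le_add fun ε hε _ => ?_
  set δ : ℝ := ε / ((volume D).toReal + 1) with hδ
  have hV : 0 ≤ (volume D).toReal := ENNReal.toReal_nonneg
  have hδ0 : 0 < δ := by positivity
  have hδV : ENNReal.ofReal δ * volume D ≤ ε := by
    rw [← ENNReal.ofReal_toReal hDfin, ← ENNReal.ofReal_mul hδ0.le, ← ENNReal.ofReal_coe_nnreal]
    refine ENNReal.ofReal_le_ofReal ?_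
    rw [hδ, div_mul_eq_mul_div, div_le_iff₀ (by positivity)]
    nlinarith [ε.2]
  calc ∫⁻ x in D, ENNReal.ofReal (f x)
      ≤ ∫⁻ x in D, (ENNReal.ofReal (f x - (t + δ)) + ENNReal.ofReal (t + δ)) :=
        lintegral_mono fun x => ofReal_le_sub_add _ _
    _ = (∫⁻ x in D, ENNReal.ofReal (f x - (t + δ))) + ENNReal.ofReal (t + δ) * volume D := by
        rw [lintegral_add_right _ measurable_const, setLIntegral_const]
    _ ≤ ((∫⁻ x, ENNReal.ofReal (g x - (t + δ))) + η) + ENNReal.ofReal (t + δ) * volume D := by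
        gcongr
        exact (setLIntegral_le_lintegral _ _).trans (hinge _ (by positivity))
    _ ≤ ((∫⁻ x, ENNReal.ofReal (g x - t)) + η) +
        (ENNReal.ofReal t * volume D + ENNReal.ofReal δ * volume D) := by
        rw [ENNReal.ofReal_add ht0 hδ0.le, add_mul]
        gcongr with x
        linarith
    _ ≤ ((∫⁻ x, ENNReal.ofReal (g x - t)) + η) + (ENNReal.ofReal t * volume D + ε) := by gcongr
    _ = (∫⁻ x in D, ENNReal.ofReal (g x)) + η + ε := by
        rw [← hadd, hsub]; ring

lemma setLIntegral_le_of_hinge {f g : E → ℝ} {η : ℝ≥0∞}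
    (hg : ∀ x y, ‖x‖ ≤ ‖y‖ → g y ≤ g x)
    (hinge : ∀ s : ℝ, 0 < s → ∫⁻ x, ENNReal.ofReal (f x - s) ≤
      (∫⁻ x, ENNReal.ofReal (g x - s)) + η)
    {D : Set E} (hDm : MeasurableSet D) (hD : ∀ x ∈ D, ∀ y, ‖y‖ ≤ ‖x‖ → y ∈ D) :
    ∫⁻ x in D, ENNReal.ofReal (f x) ≤ (∫⁻ x in D, ENNReal.ofReal (g x)) + η := by
  refine lintegral_le_of_forall_ball fun k => ?_
  refine (setLIntegral_le_of_hinge_of_finite hg hinge (hDm.inter measurableSet_ball) ?_ ?_).trans ?_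
  · intro x hx y hy
    refine ⟨hD x hx.1 y hy, ?_⟩
    have := hx.2
    rw [mem_ball_zero_iff] at this ⊢
    exact hy.trans_lt this
  · exact ((measure_mono Set.inter_subset_right).trans_lt measure_ball_lt_top).ne
  · gcongr
    exact Set.inter_subset_left

/-- The radius may be non-positive, giving the empty ball. -/
lemma exists_eq_ball {D : Set E} (hDo : IsOpen D) (hD : ∀ x ∈ D, ∀ y, ‖y‖ ≤ ‖x‖ → y ∈ D)
    {k : ℝ} (hk : D ⊆ Metric.ball 0 k) : ∃ R, D = Metric.ball (0 : E) R := by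
  rcases Set.eq_empty_or_nonempty Dᶜ with h | h
  · rw [Set.compl_empty_iff] at h
    refine ⟨k, hk.antisymm ?_⟩
    rw [h]; exact Set.subset_univ _
  · obtain ⟨y, hy, hdist⟩ := hDo.isClosed_compl.exists_infDist_eq_dist h (0 : E)
    rw [dist_zero_left] at hdist
    refine ⟨‖y‖, Set.ext fun x => ?_⟩
    rw [mem_ball_zero_iff]
    constructor
    · intro hx
      by_contra hlt
      exact hy (hD x hx y (not_lt.1 hlt))
    · intro hx
      by_contra hxD
      have := Metric.infDist_le_dist_of_mem (x := (0 : E)) (s := Dᶜ) hxD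
      rw [dist_zero_left] at this
      linarith

/-- Majorization on balls gives the hinge inequality: by lower semicontinuity `{f > s}` is an open
centred ball, on which `∫ (f - s) ≤ ∫ (g - s) ≤ ∫ (g - s)₊`. -/
lemma hinge_of_ball_le {f g : E → ℝ} (hf : ∀ x y, ‖x‖ ≤ ‖y‖ → f y ≤ f x)
    (hfl : LowerSemicontinuous f)
    (hmaj : ∀ r : ℝ, 0 < r → ∫⁻ x in Metric.ball (0 : E) r, ENNReal.ofReal (f x) ≤
      ∫⁻ x in Metric.ball (0 : E) r, ENNReal.ofReal (g x)) (s : ℝ) (hs : 0 < s) :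
    ∫⁻ x, ENNReal.ofReal (f x - s) ≤ ∫⁻ x, ENNReal.ofReal (g x - s) := by
  rw [← setLIntegral_univ]
  refine lintegral_le_of_forall_ball fun k => ?_
  rw [Set.univ_inter]
  set D : Set E := f ⁻¹' Set.Ioi s ∩ Metric.ball 0 k with hDdef
  have hDo : IsOpen D := (hfl.isOpen_preimage s).inter Metric.isOpen_ball
  have hDm := hDo.measurableSet
  have hDfin : volume D ≠ ∞ :=
    ((measure_mono Set.inter_subset_right).trans_lt measure_ball_lt_top).ne
  obtain ⟨R, hR⟩ := exists_eq_ball hDo (fun x hx y hy => ⟨lt_of_lt_of_le hx.1 (hf _ _ hy), by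
    have := hx.2
    rw [mem_ball_zero_iff] at this ⊢
    exact hy.trans_lt this⟩) Set.inter_subset_right
  have hDle : ∫⁻ x in D, ENNReal.ofReal (f x) ≤ ∫⁻ x in D, ENNReal.ofReal (g x) := by
    rcases le_or_gt R 0 with h | h
    · rw [hR, Metric.ball_eq_empty.2 h]; simp
    · rw [hR]; exact hmaj R h
  have h1 : ∫⁻ x in Metric.ball (0 : E) k, ENNReal.ofReal (f x - s) =
      ∫⁻ x in D, ENNReal.ofReal (f x - s) := by
    rw [← lintegral_indicator measurableSet_ball, ← lintegral_indicator hDm]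
    refine lintegral_congr fun x => ?_
    by_cases hx : x ∈ Metric.ball (0 : E) k
    · by_cases hx' : s < f x
      · rw [Set.indicator_of_mem hx, Set.indicator_of_mem (show x ∈ D from ⟨hx', hx⟩)]
      · rw [Set.indicator_of_mem hx, Set.indicator_of_notMem fun h => hx' h.1]
        exact ENNReal.ofReal_of_nonpos (by linarith)
    · rw [Set.indicator_of_notMem hx, Set.indicator_of_notMem fun h => hx h.2]
  rw [h1]
  have h2 : (∫⁻ x in D, ENNReal.ofReal (f x - s)) + ENNReal.ofReal s * volume D ≤
      (∫⁻ x, ENNReal.ofReal (g x - s)) + ENNReal.ofReal s * volume D := by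
    calc _ = ∫⁻ x in D, ENNReal.ofReal (f x) := by
          rw [← setLIntegral_const, ← lintegral_add_right _ measurable_const]
          refine setLIntegral_congr_fun hDm fun x hx => ?_
          have : s < f x := hx.1
          rw [← ENNReal.ofReal_add (by linarith) hs.le, sub_add_cancel]
      _ ≤ ∫⁻ x in D, (ENNReal.ofReal (g x - s) + ENNReal.ofReal s) :=
          hDle.trans (lintegral_mono fun x => ofReal_le_sub_add _ _)
      _ = (∫⁻ x in D, ENNReal.ofReal (g x - s)) + ENNReal.ofReal s * volume D := by
          rw [lintegral_add_right _ measurable_const, setLIntegral_const]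
      _ ≤ _ := add_le_add (setLIntegral_le_lintegral _ _) le_rfl
  exact (ENNReal.add_le_add_iff_right (ENNReal.mul_ne_top ENNReal.ofReal_ne_top hDfin)).1 h2

/-- Hinge integrals depend only on the distribution function, by the layer-cake formula. -/
lemma hinge_eq_of_equimeasurable {f g : E → ℝ} (hf : AEMeasurable f) (hg : AEMeasurable g)
    (h : ∀ t : ℝ, 0 < t → volume {x | t < f x} = volume {x | t < g x}) (s : ℝ) (hs : 0 < s) :
    ∫⁻ x, ENNReal.ofReal (f x - s) = ∫⁻ x, ENNReal.ofReal (g x - s) := by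
  have key : ∀ f : E → ℝ, AEMeasurable f → ∫⁻ x, ENNReal.ofReal (f x - s) =
      ∫⁻ t in Set.Ioi (0 : ℝ), volume {x | t + s < f x} := by
    intro f hf
    have h1 : ∀ x, ENNReal.ofReal (f x - s) = ENNReal.ofReal (max (f x - s) 0) := by
      intro x
      rcases le_total (f x - s) 0 with h | h
      · simp [h, ENNReal.ofReal_of_nonpos]
      · simp [h]
    simp only [h1]
    rw [lintegral_eq_lintegral_meas_lt (f := fun x => max (f x - s) 0) volume
      (Filter.Eventually.of_forall fun x => le_max_right _ _)
      ((hf.sub_const s).max aemeasurable_const)]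
    refine setLIntegral_congr_fun measurableSet_Ioi fun t ht => ?_
    have ht' : (0 : ℝ) < t := ht
    congr 1
    ext x
    simp only [Set.mem_ofPred_eq, lt_max_iff]
    constructor
    · rintro (h | h) <;> linarith
    · intro h; left; linarith
  rw [key f hf, key g hg]
  refine setLIntegral_congr_fun measurableSet_Ioi fun t ht => h _ ?_
  have ht' : (0 : ℝ) < t := ht
  linarith

/-- The hinge inequality tested against a radially non-increasing weight `0 ≤ W ≤ m`: the layer-cake
formula writes `∫ f W` as a superposition of integrals of `f` over the sets `{W > t}`, `0 < t < m`. -/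
lemma lintegral_mul_le_of_hinge {f g W : E → ℝ} {η : ℝ≥0∞} {m : ℝ}
    (hf : AEMeasurable f) (hgm : AEMeasurable g)
    (hg : ∀ x y, ‖x‖ ≤ ‖y‖ → g y ≤ g x)
    (hinge : ∀ s : ℝ, 0 < s → ∫⁻ x, ENNReal.ofReal (f x - s) ≤
      (∫⁻ x, ENNReal.ofReal (g x - s)) + η)
    (hW : ∀ x y, ‖x‖ ≤ ‖y‖ → W y ≤ W x) (hW0 : ∀ x, 0 ≤ W x) (hWm : ∀ x, W x ≤ m) :
    ∫⁻ x, ENNReal.ofReal (f x) * ENNReal.ofReal (W x) ≤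
      (∫⁻ x, ENNReal.ofReal (g x) * ENNReal.ofReal (W x)) + η * ENNReal.ofReal m := by
  have hWmeas : Measurable W := measurable_of_radDec hW
  have key : ∀ f : E → ℝ, AEMeasurable f → ∫⁻ x, ENNReal.ofReal (f x) * ENNReal.ofReal (W x) =
      ∫⁻ t in Set.Ioi (0 : ℝ), ∫⁻ x in {x | t < W x}, ENNReal.ofReal (f x) := by
    intro f hf
    have h1 := lintegral_eq_lintegral_meas_lt
      ((volume : Measure E).withDensity fun x => ENNReal.ofReal (f x))
      (Filter.Eventually.of_forall hW0) hWmeas.aemeasurable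
    rw [lintegral_withDensity_eq_lintegral_mul₀ hf.ennreal_ofReal
      hWmeas.ennreal_ofReal.aemeasurable] at h1
    refine Eq.trans h1 ?_
    refine setLIntegral_congr_fun measurableSet_Ioi fun t _ => ?_
    exact withDensity_apply _ (hWmeas measurableSet_Ioi)
  rw [key f hf, key g hgm]
  have hle : ∀ t : ℝ, ∫⁻ x in {x | t < W x}, ENNReal.ofReal (f x) ≤
      (∫⁻ x in {x | t < W x}, ENNReal.ofReal (g x)) + (Set.Iio m).indicator (fun _ => η) t := by
    intro t
    by_cases ht : t < m
    · rw [Set.indicator_of_mem (by exact ht)]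
      refine setLIntegral_le_of_hinge hg hinge (hWmeas measurableSet_Ioi) ?_
      intro x hx y hy
      exact lt_of_lt_of_le hx (hW _ _ hy)
    · have : {x | t < W x} = ∅ := by
        ext x
        simp only [Set.mem_ofPred_eq, Set.mem_empty_iff_false, iff_false, not_lt]
        exact (hWm x).trans (not_lt.1 ht)
      rw [this]; simp
  refine (lintegral_mono hle).trans ?_
  rw [lintegral_add_right _ (measurable_const.indicator measurableSet_Iio)]
  gcongr
  rw [lintegral_indicator_const measurableSet_Iio,
    Measure.restrict_apply measurableSet_Iio, Set.inter_comm, Set.Ioi_inter_Iio, Real.volume_Ioo,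
    sub_zero]

/-! ### Convolution -/

lemma exists_approx {u : E → ℝ} (hu : Integrable u) (hu0 : ∀ x, 0 ≤ u x) {ε : ℝ} (hε : 0 < ε) :
    ∃ f : E → ℝ, Continuous f ∧ HasCompactSupport f ∧ Integrable f ∧ (∀ x, 0 ≤ f x) ∧
      ∫ x, |u x - f x| ≤ ε := by
  obtain ⟨g, hgs, hg, hgc, hgi⟩ := hu.exists_hasCompactSupport_integral_sub_le hε
  have hc : Continuous fun x => max (g x) 0 := hgc.max continuous_const
  have hs : HasCompactSupport fun x => max (g x) 0 :=
    hgs.comp_left (g := fun r : ℝ => max r 0) (by simp)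
  have hi := hc.integrable_of_hasCompactSupport (μ := volume) hs
  refine ⟨_, hc, hs, hi, fun x => le_max_right _ _, le_trans ?_ hg⟩
  refine integral_mono (hu.sub hi).abs (hu.sub hgi).norm fun x => ?_
  have h := abs_max_sub_max_le_abs (u x) (g x) 0
  rw [max_eq_left (hu0 x)] at h
  exact h

lemma exists_approx_le_one {u : E → ℝ} (hu : Integrable u) (hu0 : ∀ x, 0 ≤ u x)
    (hu1 : ∀ x, u x ≤ 1) {ε : ℝ} (hε : 0 < ε) :
    ∃ f : E → ℝ, Continuous f ∧ HasCompactSupport f ∧ Integrable f ∧ (∀ x, 0 ≤ f x) ∧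
      (∀ x, f x ≤ 1) ∧ ∫ x, |u x - f x| ≤ ε := by
  obtain ⟨g, hgc, hgs, hgi, hg0, hg⟩ := exists_approx hu hu0 hε
  have hc : Continuous fun x => min (g x) 1 := hgc.min continuous_const
  have hs : HasCompactSupport fun x => min (g x) 1 :=
    hgs.comp_left (g := fun r : ℝ => min r 1) (by simp)
  have hi := hc.integrable_of_hasCompactSupport (μ := volume) hs
  refine ⟨_, hc, hs, hi, fun x => le_min (hg0 x) zero_le_one, fun x => min_le_right _ _,
    le_trans ?_ hg⟩
  refine integral_mono (hu.sub hi).abs (hu.sub hgi).abs fun x => ?_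
  have h := abs_min_sub_min_le_max (u x) 1 (g x) 1
  rw [min_eq_left (hu1 x)] at h
  simpa using h

lemma conv_nonneg {μ ξ : E → ℝ} (hμ0 : ∀ x, 0 ≤ μ x) (hξ0 : ∀ x, 0 ≤ ξ x) (x : E) :
    0 ≤ ∫ z, ξ z * μ (x - z) :=
  integral_nonneg fun z => mul_nonneg (hξ0 z) (hμ0 _)

lemma conv_le {μ ξ : E → ℝ} (hμ : ∀ x y, ‖x‖ ≤ ‖y‖ → μ y ≤ μ x) (hμ0 : ∀ x, 0 ≤ μ x)
    (hξi : Integrable ξ) (hξ0 : ∀ x, 0 ≤ ξ x) (x : E) :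
    ∫ z, ξ z * μ (x - z) ≤ μ 0 * ∫ z, ξ z := by
  rw [← integral_const_mul]
  refine integral_mono_of_nonneg (Filter.Eventually.of_forall fun z => mul_nonneg (hξ0 z) (hμ0 _))
    (hξi.const_mul _) (Filter.Eventually.of_forall fun z => ?_)
  simp only
  rw [mul_comm]
  exact mul_le_mul_of_nonneg_right (hμ _ _ (by simp)) (hξ0 z)

/-- `ξ` is only a.e. strongly measurable, but its modification on a null set gives the same convolution. -/
lemma measurable_conv {μ ξ : E → ℝ} (hμ : ∀ x y, ‖x‖ ≤ ‖y‖ → μ y ≤ μ x)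
    (hξi : Integrable ξ) : Measurable fun x => ∫ z, ξ z * μ (x - z) := by
  have h1 : (fun x => ∫ z, ξ z * μ (x - z)) = fun x => ∫ z, hξi.1.mk ξ z * μ (x - z) := by
    ext x
    refine integral_congr_ae ?_
    filter_upwards [hξi.1.ae_eq_mk] with z hz
    rw [hz]
  rw [h1]
  have h2 : Measurable fun p : E × E => hξi.1.mk ξ p.2 * μ (p.1 - p.2) :=
    (hξi.1.stronglyMeasurable_mk.measurable.comp measurable_snd).mul
      ((measurable_of_radDec hμ).comp (measurable_fst.sub measurable_snd))
  exact (StronglyMeasurable.integral_prod_right (ν := (volume : Measure E))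
    h2.stronglyMeasurable).measurable

/-- The Riesz form is Lipschitz in `L¹` with respect to its first function. -/
lemma riesz_le_add {μ u f v : E → ℝ} (hμ : ∀ x y, ‖x‖ ≤ ‖y‖ → μ y ≤ μ x) (hμ0 : ∀ x, 0 ≤ μ x)
    (hu : Integrable u) (hf : Integrable f) (hv : Integrable v) (hv0 : ∀ x, 0 ≤ v x) :
    riesz μ u v ≤ riesz μ f v + (∫ x, |u x - f x|) * (μ 0 * ∫ x, v x) := by
  have hi : Integrable (fun p : E × E => |u p.2 - f p.2| * v p.1 * μ 0) := by
    have h1 : Integrable (fun p : E × E => v p.1 * |u p.2 - f p.2|) (volume.prod volume) :=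
      hv.mul_prod (hu.sub hf).abs
    refine (h1.mul_const (μ 0)).congr (Filter.Eventually.of_forall fun p => ?_)
    simp only; ring
  have he : (∫ x, |u x - f x|) * (μ 0 * ∫ x, v x) =
      ∫ p : E × E, |u p.2 - f p.2| * v p.1 * μ 0 := by
    have h2 := integral_prod_mul (μ := (volume : Measure E)) (ν := (volume : Measure E)) v
      (fun x => |u x - f x|)
    rw [integral_mul_const]
    have h3 : ∫ p : E × E, |u p.2 - f p.2| * v p.1 = (∫ x, v x) * ∫ x, |u x - f x| := by
      rw [← h2, Measure.volume_eq_prod]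
      congr 1; ext p; ring
    rw [h3]; ring
  rw [he, riesz, riesz, ← integral_add (integrable_riesz hμ hμ0 hf hv) hi]
  refine integral_mono (integrable_riesz hμ hμ0 hu hv)
    ((integrable_riesz hμ hμ0 hf hv).add hi) fun p => ?_
  have h1 : μ (p.1 - p.2) ≤ μ 0 := hμ _ _ (by simp)
  have h2 : u p.2 * v p.1 * μ (p.1 - p.2) - f p.2 * v p.1 * μ (p.1 - p.2) ≤
      |u p.2 - f p.2| * v p.1 * μ 0 := by
    have h3 := mul_le_mul_of_nonneg_right (le_abs_self (u p.2 - f p.2))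
      (mul_nonneg (hv0 p.1) (hμ0 (p.1 - p.2)))
    have h4 := mul_le_mul_of_nonneg_left h1 (mul_nonneg (abs_nonneg (u p.2 - f p.2)) (hv0 p.1))
    nlinarith
  linarith

lemma lintegral_hinge_eq {f : E → ℝ} (hf : Integrable f) (hf0 : ∀ x, 0 ≤ f x) {s : ℝ}
    (hs : 0 ≤ s) : ∫⁻ x, ENNReal.ofReal (f x - s) = ENNReal.ofReal (∫ x, max (f x - s) 0) := by
  rw [ofReal_integral_eq_lintegral_ofReal]
  · refine lintegral_congr fun x => ?_
    rcases le_total (f x - s) 0 with h | h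
    · simp [h, ENNReal.ofReal_of_nonpos]
    · simp [h]
  · refine hf.mono' ((hf.1.aemeasurable.sub_const s).max aemeasurable_const).aestronglyMeasurable
      (Filter.Eventually.of_forall fun x => ?_)
    rw [Real.norm_of_nonneg (le_max_right _ _)]
    exact max_le (by linarith) (hf0 x)
  · exact Filter.Eventually.of_forall fun x => le_max_right _ _

lemma hinge_approx {u f : E → ℝ} (hu : Integrable u) (hf : Integrable f) {ε : ℝ}
    (h : ∫ x, |u x - f x| ≤ ε) (s : ℝ) :
    ∫⁻ x, ENNReal.ofReal (f x - s) ≤ (∫⁻ x, ENNReal.ofReal (u x - s)) + ENNReal.ofReal ε := by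
  have hd : Integrable fun x => |u x - f x| := (hu.sub hf).abs
  have h1 : ∫⁻ x, ENNReal.ofReal |u x - f x| ≤ ENNReal.ofReal ε := by
    rw [← ofReal_integral_eq_lintegral_ofReal hd
      (Filter.Eventually.of_forall fun x => abs_nonneg _)]
    exact ENNReal.ofReal_le_ofReal h
  refine le_trans ?_ (add_le_add le_rfl h1)
  rw [← lintegral_add_right' _ hd.1.aemeasurable.ennreal_ofReal]
  refine lintegral_mono fun x => ?_
  refine le_trans (ENNReal.ofReal_le_ofReal ?_) ENNReal.ofReal_add_le
  have := neg_abs_le (u x - f x)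
  linarith

/-- Hinge domination by a radially non-increasing `g` passes to the Riesz form against a radially
non-increasing `h`, because `h * μ` is then a radially non-increasing weight. -/
lemma riesz_le_of_hinge {μ f g h : E → ℝ} (hμ : ∀ x y, ‖x‖ ≤ ‖y‖ → μ y ≤ μ x)
    (hμ0 : ∀ x, 0 ≤ μ x) (hf : Integrable f) (hg : Integrable g) (hh : Integrable h)
    (hf0 : ∀ x, 0 ≤ f x) (hg0 : ∀ x, 0 ≤ g x) (hh0 : ∀ x, 0 ≤ h x)
    (hgr : ∀ x y, ‖x‖ ≤ ‖y‖ → g y ≤ g x) (hhr : ∀ x y, ‖x‖ ≤ ‖y‖ → h y ≤ h x)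
    {ε : ℝ} (hε : 0 ≤ ε)
    (hinge : ∀ s : ℝ, 0 < s → ∫⁻ x, ENNReal.ofReal (f x - s) ≤
      (∫⁻ x, ENNReal.ofReal (g x - s)) + ENNReal.ofReal ε) :
    riesz μ f h ≤ riesz μ g h + ε * (μ 0 * ∫ x, h x) := by
  set W : E → ℝ := fun z => ∫ x, h x * μ (x - z) with hW
  have hsymm : ∀ x z, μ (x - z) = μ (z - x) := fun x z =>
    le_antisymm (hμ _ _ (norm_sub_rev _ _).le) (hμ _ _ (norm_sub_rev _ _).le)
  have hWr : ∀ x y, ‖x‖ ≤ ‖y‖ → W y ≤ W x := radDec_conv hμ hμ0 hhr hh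
  have hW0 : ∀ x, 0 ≤ W x := fun z => integral_nonneg fun x => mul_nonneg (hh0 x) (hμ0 _)
  have hWm : ∀ x, W x ≤ μ 0 * ∫ x, h x := fun z => by
    have := conv_le hμ hμ0 hh hh0 z
    simp only [hsymm z] at this
    exact this
  have hm0 : 0 ≤ μ 0 * ∫ x, h x := mul_nonneg (hμ0 _) (integral_nonneg hh0)
  have hi : ∀ u : E → ℝ, Integrable u → Integrable fun z => u z * W z := fun u hu =>
    hu.mul_bdd (c := μ 0 * ∫ x, h x) (measurable_of_radDec hWr).aestronglyMeasurable
      (Filter.Eventually.of_forall fun z => by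
        rw [Real.norm_of_nonneg (hW0 z)]; exact hWm z)
  have hl : ∀ u : E → ℝ, Integrable u → (∀ x, 0 ≤ u x) → ENNReal.ofReal (riesz μ u h) =
      ∫⁻ x, ENNReal.ofReal (u x) * ENNReal.ofReal (W x) := by
    intro u hu hu0
    rw [riesz_eq_right hμ hμ0 hu hh, ofReal_integral_eq_lintegral_ofReal (hi u hu)
      (Filter.Eventually.of_forall fun z => mul_nonneg (hu0 z) (hW0 z))]
    exact lintegral_congr fun x => ENNReal.ofReal_mul (hu0 x)
  have hr0 : 0 ≤ riesz μ g h := integral_nonneg fun p =>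
    mul_nonneg (mul_nonneg (hg0 _) (hh0 _)) (hμ0 _)
  have key := lintegral_mul_le_of_hinge hf.1.aemeasurable hg.1.aemeasurable hgr hinge hWr hW0 hWm
  rw [← hl f hf hf0, ← hl g hg hg0, ← ENNReal.ofReal_mul hε,
    ← ENNReal.ofReal_add hr0 (mul_nonneg hε hm0)] at key
  exact (ENNReal.ofReal_le_ofReal_iff (add_nonneg hr0 (mul_nonneg hε hm0))).1 key

/-- `∫ h (u * μ - t) ≤ ∫ (u * μ - t)₊` for every test function `0 ≤ h ≤ 1`. -/
lemma riesz_sub_le_hinge {μ u h : E → ℝ} (hμ : ∀ x y, ‖x‖ ≤ ‖y‖ → μ y ≤ μ x)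
    (hμ0 : ∀ x, 0 ≤ μ x) (hu : Integrable u) (hu0 : ∀ x, 0 ≤ u x) (hh : Integrable h)
    (hh0 : ∀ x, 0 ≤ h x) (hh1 : ∀ x, h x ≤ 1) {t : ℝ}
    (hfin : ∫⁻ x, ENNReal.ofReal ((∫ z, u z * μ (x - z)) - t) ≠ ∞) :
    riesz μ u h - t * ∫ x, h x ≤
      (∫⁻ x, ENNReal.ofReal ((∫ z, u z * μ (x - z)) - t)).toReal := by
  have hm : Measurable fun x => (∫ z, u z * μ (x - z)) - t := (measurable_conv hμ hu).sub_const t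
  have he : ∀ a : ℝ, ENNReal.ofReal a = ENNReal.ofReal (max a 0) := by
    intro a
    rcases le_total a 0 with h | h
    · simp [h, ENNReal.ofReal_of_nonpos]
    · simp [h]
  have hmm : Measurable fun x => max ((∫ z, u z * μ (x - z)) - t) 0 := hm.max measurable_const
  have hm0 : 0 ≤ᵐ[volume] fun x => max ((∫ z, u z * μ (x - z)) - t) 0 :=
    Filter.Eventually.of_forall fun x => le_max_right _ _
  have hmi : Integrable fun x => max ((∫ z, u z * μ (x - z)) - t) 0 := by
    refine ⟨hmm.aestronglyMeasurable, ?_⟩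
    rw [hasFiniteIntegral_iff_ofReal hm0]
    simp only [← he]
    exact lt_top_iff_ne_top.2 hfin
  have hA : (∫⁻ x, ENNReal.ofReal ((∫ z, u z * μ (x - z)) - t)).toReal =
      ∫ x, max ((∫ z, u z * μ (x - z)) - t) 0 := by
    rw [integral_eq_lintegral_of_nonneg_ae hm0 hmm.aestronglyMeasurable]
    simp only [← he]
  have hhc : Integrable fun x => h x * ∫ z, u z * μ (x - z) :=
    hh.mul_bdd (c := μ 0 * ∫ z, u z) (measurable_conv hμ hu).aestronglyMeasurable
      (Filter.Eventually.of_forall fun x => by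
        rw [Real.norm_of_nonneg (conv_nonneg hμ0 hu0 x)]; exact conv_le hμ hμ0 hu hu0 x)
  rw [hA, riesz_eq_left hμ hμ0 hu hh, ← integral_const_mul, ← integral_sub hhc (hh.const_mul t)]
  refine integral_mono (hhc.sub (hh.const_mul t)) hmi fun x => ?_
  simp only
  rcases le_total ((∫ z, u z * μ (x - z)) - t) 0 with h' | h'
  · rw [max_eq_right h']
    nlinarith [hh0 x]
  · rw [max_eq_left h']
    nlinarith [hh1 x]

/-- The same bound with `ξ` in place of `ξt` on the left-hand side: approximate `ξ` by `f`, symmetrize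
`(f, h)`, and compare the symmetrized `f` with `ξt`. -/
lemma riesz_sub_le {μ ξ ξt h : E → ℝ} (hμ : ∀ x y, ‖x‖ ≤ ‖y‖ → μ y ≤ μ x)
    (hμ0 : ∀ x, 0 ≤ μ x) (hξ : Integrable ξ) (hξt : Integrable ξt) (hξ0 : ∀ x, 0 ≤ ξ x)
    (hξt0 : ∀ x, 0 ≤ ξt x) (hξtr : ∀ x y, ‖x‖ ≤ ‖y‖ → ξt y ≤ ξt x)
    (hinge : ∀ s : ℝ, 0 < s → ∫⁻ x, ENNReal.ofReal (ξ x - s) ≤ ∫⁻ x, ENNReal.ofReal (ξt x - s))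
    (hh : Continuous h) (hhs : HasCompactSupport h) (hh0 : ∀ x, 0 ≤ h x) (hh1 : ∀ x, h x ≤ 1)
    {t : ℝ} (hfin : ∫⁻ x, ENNReal.ofReal ((∫ z, ξt z * μ (x - z)) - t) ≠ ∞) :
    riesz μ ξ h - t * ∫ x, h x ≤
      (∫⁻ x, ENNReal.ofReal ((∫ z, ξt z * μ (x - z)) - t)).toReal := by
  have hhi := hh.integrable_of_hasCompactSupport (μ := volume) hhs
  set m := μ 0 * ∫ x, h x with hm
  have hm0 : 0 ≤ m := mul_nonneg (hμ0 _) (integral_nonneg hh0)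
  refine le_of_forall_pos_le_add fun δ hδ => ?_
  -- two errors of size `ε * m` arise below
  set ε := δ / (2 * (m + 1)) with hεdef
  have hε : 0 < ε := by positivity
  have hεm : 2 * (ε * m) ≤ δ := by
    rw [hεdef, div_mul_eq_mul_div, mul_div_assoc', div_le_iff₀ (by positivity)]
    nlinarith
  obtain ⟨f, hfc, hfs, hfi, hf0, hfε⟩ := exists_approx hξ hξ0 hε
  obtain ⟨f', h', hf'i, hh'i, -, hf'0, hh'0, hh'1, -, hh'r, hf'h, hh'int, hle⟩ :=
    exists_symm hμ hμ0 hfc hfs hf0 hh hhs hh0 hh1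
  have hinge' : ∀ s : ℝ, 0 < s → ∫⁻ x, ENNReal.ofReal (f' x - s) ≤
      (∫⁻ x, ENNReal.ofReal (ξt x - s)) + ENNReal.ofReal ε := by
    intro s hs
    rw [lintegral_hinge_eq hf'i hf'0 hs.le, hf'h s hs.le, ← lintegral_hinge_eq hfi hf0 hs.le]
    exact (hinge_approx hξ hfi hfε s).trans (add_le_add (hinge s hs) le_rfl)
  have h1 : riesz μ ξ h ≤ riesz μ f h + ε * m :=
    (riesz_le_add hμ hμ0 hξ hfi hhi hh0).trans
      (add_le_add le_rfl (mul_le_mul_of_nonneg_right hfε hm0))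
  have h2 := riesz_le_of_hinge hμ hμ0 hf'i hξt hh'i hf'0 hξt0 hh'0 hξtr hh'r hε.le hinge'
  have h3 := riesz_sub_le_hinge hμ hμ0 hξt hξt0 hh'i hh'0 hh'1 hfin
  rw [hh'int] at h2 h3
  linarith

/-- The hinge inequality passes to the convolutions with `μ`: test `ξ * μ - t` against continuous functions
close in `L¹` to the indicator of a bounded piece of `{ξ * μ > t}`. -/
lemma hinge_conv {μ ξ ξt : E → ℝ} (hμ : ∀ x y, ‖x‖ ≤ ‖y‖ → μ y ≤ μ x)
    (hμ0 : ∀ x, 0 ≤ μ x) (hξ : Integrable ξ) (hξt : Integrable ξt) (hξ0 : ∀ x, 0 ≤ ξ x)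
    (hξt0 : ∀ x, 0 ≤ ξt x) (hξtr : ∀ x y, ‖x‖ ≤ ‖y‖ → ξt y ≤ ξt x)
    (hinge : ∀ s : ℝ, 0 < s → ∫⁻ x, ENNReal.ofReal (ξ x - s) ≤ ∫⁻ x, ENNReal.ofReal (ξt x - s))
    (t : ℝ) (ht : 0 < t) :
    ∫⁻ x, ENNReal.ofReal ((∫ z, ξ z * μ (x - z)) - t) ≤
      ∫⁻ x, ENNReal.ofReal ((∫ z, ξt z * μ (x - z)) - t) := by
  by_cases hfin : ∫⁻ x, ENNReal.ofReal ((∫ z, ξt z * μ (x - z)) - t) = ∞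
  · rw [hfin]; exact le_top
  set A := (∫⁻ x, ENNReal.ofReal ((∫ z, ξt z * μ (x - z)) - t)).toReal with hA
  set c : E → ℝ := fun x => ∫ z, ξ z * μ (x - z) with hc
  have hcm : Measurable c := measurable_conv hμ hξ
  have hc0 : ∀ x, 0 ≤ c x := conv_nonneg hμ0 hξ0
  set m := μ 0 * ∫ z, ξ z with hm
  have hcle : ∀ x, c x ≤ m := conv_le hμ hμ0 hξ hξ0
  have hm0 : 0 ≤ m := mul_nonneg (hμ0 _) (integral_nonneg hξ0)
  rw [← setLIntegral_univ]
  refine lintegral_le_of_forall_ball fun k => ?_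
  rw [Set.univ_inter]
  set S : Set E := Metric.ball 0 k ∩ {x | t < c x} with hS
  have hSm : MeasurableSet S := measurableSet_ball.inter (hcm measurableSet_Ioi)
  have hSfin : volume S ≠ ∞ :=
    ((measure_mono Set.inter_subset_left).trans_lt measure_ball_lt_top).ne
  have hui : Integrable (S.indicator fun _ => (1 : ℝ)) :=
    (integrable_indicator_iff hSm).2 (integrableOn_const hSfin)
  have hci : ∀ v : E → ℝ, Integrable v → Integrable fun x => v x * (c x - t) := fun v hv =>
    hv.mul_bdd (c := m + t) (hcm.sub_const t).aestronglyMeasurable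
      (Filter.Eventually.of_forall fun x => by
        rw [Real.norm_eq_abs, abs_le]; constructor <;> linarith [hc0 x, hcle x])
  have hle : ∫ x, S.indicator (fun _ => (1 : ℝ)) x * (c x - t) ≤ A := by
    refine le_of_forall_pos_le_add fun δ hδ => ?_
    set ε := δ / (m + t) with hεdef
    have hmt : 0 < m + t := by linarith
    have hε : 0 < ε := by positivity
    obtain ⟨h, hhc, hhs, hhi, hh0, hh1, hhε⟩ := exists_approx_le_one hui
      (fun x => Set.indicator_nonneg (fun _ _ => zero_le_one) x)
      (fun x => Set.indicator_le_self' (f := fun _ => (1 : ℝ)) (fun _ _ => zero_le_one) x) hε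
    have h1 := riesz_sub_le hμ hμ0 hξ hξt hξ0 hξt0 hξtr hinge hhc hhs hh0 hh1 hfin
    have h2 : riesz μ ξ h - t * ∫ x, h x = ∫ x, h x * (c x - t) := by
      rw [riesz_eq_left hμ hμ0 hξ hhi, ← integral_const_mul, ← integral_sub]
      · congr 1; ext x; ring
      · refine ((hci h hhi).add (hhi.const_mul t)).congr (Filter.Eventually.of_forall fun x => ?_)
        simp only [Pi.add_apply, hc]; ring
      · exact hhi.const_mul t
    have h3 : ∫ x, S.indicator (fun _ => (1 : ℝ)) x * (c x - t) ≤
        (∫ x, h x * (c x - t)) + ε * (m + t) := by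
      refine le_trans ?_ (add_le_add le_rfl (mul_le_mul_of_nonneg_right hhε hmt.le))
      have hd : Integrable fun x => |S.indicator (fun _ => (1 : ℝ)) x - h x| * (m + t) :=
        (hui.sub hhi).abs.mul_const _
      rw [← integral_mul_const, ← integral_add (hci h hhi) hd]
      refine integral_mono (hci _ hui) ((hci h hhi).add hd) fun x => ?_
      simp only
      set a := S.indicator (fun _ => (1 : ℝ)) x
      have h4 : (a - h x) * (c x - t) ≤ |a - h x| * (m + t) := by
        refine (le_abs_self _).trans ?_
        rw [abs_mul]
        refine mul_le_mul_of_nonneg_left ?_ (abs_nonneg _)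
        rw [abs_le]; constructor <;> linarith [hc0 x, hcle x]
      linarith
    have h5 : ε * (m + t) = δ := by rw [hεdef]; field_simp
    rw [h2] at h1
    linarith
  have hL : ∫⁻ x in Metric.ball (0 : E) k, ENNReal.ofReal (c x - t) =
      ENNReal.ofReal (∫ x, S.indicator (fun _ => (1 : ℝ)) x * (c x - t)) := by
    rw [ofReal_integral_eq_lintegral_ofReal (hci _ hui), ← lintegral_indicator measurableSet_ball]
    · refine lintegral_congr fun x => ?_
      by_cases hx : x ∈ Metric.ball (0 : E) k
      · by_cases hx' : t < c x
        · rw [Set.indicator_of_mem hx, Set.indicator_of_mem (show x ∈ S from ⟨hx, hx'⟩), one_mul]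
        · rw [Set.indicator_of_mem hx, Set.indicator_of_notMem (s := S) fun h => hx' h.2,
            ENNReal.ofReal_of_nonpos (by linarith)]
          simp
      · rw [Set.indicator_of_notMem hx, Set.indicator_of_notMem (s := S) fun h => hx h.1]
        simp
    · refine Filter.Eventually.of_forall fun x => ?_
      by_cases hx : x ∈ S
      · have : t < c x := hx.2
        simp only [Set.indicator_of_mem hx, Pi.zero_apply]
        linarith
      · simp [Set.indicator_of_notMem hx]
  rw [hL, ← ENNReal.ofReal_toReal hfin]
  exact ENNReal.ofReal_le_ofReal hle

end

/-! ### Symmetric unimodal functions on Euclidean space -/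

/-- The form in which symmetric unimodality is used throughout. -/
lemma SymmUnimodal.radDec {n : ℕ} {f : EuclideanSpace ℝ (Fin n) → ℝ} (hf : SymmUnimodal f)
    (x y : EuclideanSpace ℝ (Fin n)) (h : ‖x‖ ≤ ‖y‖) : f y ≤ f x := by
  obtain ⟨φ, hφ, hfφ⟩ := hf
  rw [hfφ, hfφ]
  exact hφ (norm_nonneg x) (norm_nonneg y) h

theorem stmt17 {n : ℕ} (μ ξ ξt : EuclideanSpace ℝ (Fin n) → ℝ)
    (hμnn : ∀ x, 0 ≤ μ x) (hμsu : SymmUnimodal μ)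
    (hξnn : ∀ x, 0 ≤ ξ x) (hξtnn : ∀ x, 0 ≤ ξt x)
    (hξint : Integrable ξ) (hξtint : Integrable ξt)
    (hξtsu : SymmUnimodal ξt)
    (ξσ ξtσ cσ ctσ : EuclideanSpace ℝ (Fin n) → ℝ)
    (hξσ : IsSDR ξ ξσ) (hξtσ : IsSDR ξt ξtσ)
    (hcσ : IsSDR (conv ξ μ) cσ) (hctσ : IsSDR (conv ξt μ) ctσ)
    (hmaj : ∀ r : ℝ, 0 < r →
      ∫⁻ x in Metric.ball (0 : EuclideanSpace ℝ (Fin n)) r, ENNReal.ofReal (ξσ x) ≤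
      ∫⁻ x in Metric.ball (0 : EuclideanSpace ℝ (Fin n)) r, ENNReal.ofReal (ξtσ x)) :
    ∀ r : ℝ, 0 < r →
      ∫⁻ x in Metric.ball (0 : EuclideanSpace ℝ (Fin n)) r, ENNReal.ofReal (cσ x) ≤
      ∫⁻ x in Metric.ball (0 : EuclideanSpace ℝ (Fin n)) r, ENNReal.ofReal (ctσ x) := by
  have hμ := hμsu.radDec
  have hξtr := hξtsu.radDec
  have hinge : ∀ s : ℝ, 0 < s →
      ∫⁻ x, ENNReal.ofReal (ξ x - s) ≤ ∫⁻ x, ENNReal.ofReal (ξt x - s) := by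
    intro s hs
    rw [← hinge_eq_of_equimeasurable hξσ.2.1.measurable.aemeasurable hξint.1.aemeasurable
        hξσ.2.2 s hs,
      ← hinge_eq_of_equimeasurable hξtσ.2.1.measurable.aemeasurable hξtint.1.aemeasurable
        hξtσ.2.2 s hs]
    exact hinge_of_ball_le hξσ.1.radDec hξσ.2.1 hmaj s hs
  have hinge' : ∀ s : ℝ, 0 < s →
      ∫⁻ x, ENNReal.ofReal (cσ x - s) ≤ (∫⁻ x, ENNReal.ofReal (ctσ x - s)) + 0 := by
    intro s hs
    rw [add_zero, hinge_eq_of_equimeasurable hcσ.2.1.measurable.aemeasurable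
        (measurable_conv hμ hξint).aemeasurable hcσ.2.2 s hs,
      hinge_eq_of_equimeasurable hctσ.2.1.measurable.aemeasurable
        (measurable_conv hμ hξtint).aemeasurable hctσ.2.2 s hs]
    exact hinge_conv hμ hμnn hξint hξtint hξnn hξtnn hξtr hinge s hs
  intro r _
  have key := setLIntegral_le_of_hinge hctσ.1.radDec hinge' (D := Metric.ball 0 r)
    measurableSet_ball ?_
  · simpa using key
  · intro x hx y hy
    rw [mem_ball_zero_iff] at hx ⊢
    exact hy.trans_lt hx
end
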